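/- arXiv:2310.00414 — 2 statements merged into one kernel-verified Lean document; each statement's English description precedes it below -/
import Mathlib

section
/- Let Γ be a non-ascending n-rose labeled graph with all labels positive and n ≤ 3, and let e₁,…,e_k (one orientation of each mobile pair, 0 ≤ k ≤ n) be exactly the mobile edges of Γ up to orientation. Suppose Γ′ is obtained from Γ by a finite sequence of single slide moves, each sliding a mobile edge. Then Γ′ can also be obtained from Γ by a finite sequence of single slide moves of mobile edges that decomposes into k consecutive blocks, where for each j = 1,…,k the j-th block consists only of slides of the edges e_j and ē_j. -/
/-! Labeled graphs in the sense of generalized Baumslag–Solitar theory. -/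

structure LGraph (V E : Type) where
  o : E → V
  bar : E → E
  bar_bar : ∀ e, bar (bar e) = e
  bar_ne : ∀ e, bar e ≠ e
  lab : E → ℤ

namespace LGraph

variable {V E V' E' : Type}

/-- Terminal vertex of an oriented edge. -/
def t (G : LGraph V E) (e : E) : V := G.o (G.bar e)

/-- All labels are positive. -/
def Positive (G : LGraph V E) : Prop := ∀ e : E, 0 < G.lab e

/-- No collapsible edge: every label-1 edge is a loop. -/
def Reduced (G : LGraph V E) : Prop := ∀ e : E, G.lab e = 1 → G.o e = G.t e

/-- An `n`-rose: one vertex and `n` pairs of oriented edges. -/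
def IsRose (G : LGraph V E) (n : ℕ) : Prop :=
  Nat.card V = 1 ∧ Nat.card E = 2 * n

/-- Modulus of a single oriented edge: `λ(ē)/λ(e)`. -/
def qe (G : LGraph V E) (e : E) : ℚ := (G.lab (G.bar e) : ℚ) / (G.lab e : ℚ)

/-- Modulus of an edge path. -/
def q (G : LGraph V E) (l : List E) : ℚ := (l.map G.qe).prod

/-- Consecutive edges match up. -/
def IsEdgePath (G : LGraph V E) (l : List E) : Prop :=
  List.Chain' (fun a b => G.t a = G.o b) l

/-- An `e`-edge path. -/
def IsEEdgePath (G : LGraph V E) (e : E) (l : List E) : Prop :=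
  G.IsEdgePath l ∧
  (∀ a ∈ l, a ≠ e ∧ a ≠ G.bar e) ∧
  (∀ a ∈ l.head?, G.o a = G.o e) ∧
  ∀ i : Fin l.length, ∃ k : ℤ,
    (G.lab e : ℚ) * G.q (l.take i.1) = (k : ℚ) * (G.lab (l.get i) : ℚ)

/-- A monotone cycle `(e₁,…,eₛ,e)`. -/
def IsMonotoneCycle (G : LGraph V E) (l : List E) (e : E) : Prop :=
  G.IsEEdgePath (G.bar e) l ∧
  G.t (l.getLastD e) = G.o e ∧
  ∃ k : ℤ, G.q (l ++ [e]) = (k : ℚ)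

/-- A strict monotone cycle. -/
def IsStrictMonotoneCycle (G : LGraph V E) (l : List E) (e : E) : Prop :=
  G.IsMonotoneCycle l e ∧ G.q (l ++ [e]) ≠ 1

def HasStrictMonotoneCycle (G : LGraph V E) : Prop :=
  ∃ (l : List E) (e : E), G.IsStrictMonotoneCycle l e

/-- A strict `e`-integer cycle. -/
def IsStrictIntegerCycle (G : LGraph V E) (e : E) (l : List E) : Prop :=
  G.IsEEdgePath e l ∧ l ≠ [] ∧
  G.t (l.getLastD e) = G.o (l.headD e) ∧
  (∃ k : ℤ, G.q l = (k : ℚ)) ∧ G.q l ≠ 1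

/-- A mobile edge. -/
def Mobile (G : LGraph V E) (e : E) : Prop :=
  (∃ l, G.IsStrictMonotoneCycle l e ∨ G.IsStrictMonotoneCycle l (G.bar e)) ∨
  (∃ l, G.IsStrictIntegerCycle e l ∨ G.IsStrictIntegerCycle (G.bar e) l)

/-- The single slide of `e` over `f` is permitted. -/
def CanSlide (G : LGraph V E) (e f : E) : Prop :=
  f ≠ e ∧ f ≠ G.bar e ∧ G.o f = G.o e ∧ G.lab f ∣ G.lab e

open Classical in
/-- The result of the single slide of `e` over `f`. -/
noncomputable def slide (G : LGraph V E) (e f : E) : LGraph V E where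
  o := fun x => if x = e then G.t f else G.o x
  bar := G.bar
  bar_bar := G.bar_bar
  bar_ne := G.bar_ne
  lab := fun x => if x = e then G.lab e * G.lab (G.bar f) / G.lab f else G.lab x

/-- Successively slide `e` over the edges of a path. -/
noncomputable def slidePath : LGraph V E → E → List E → LGraph V E
  | G, _, [] => G
  | G, e, f :: l => slidePath (G.slide e f) e l

/-- Each single slide in the successive slide of `e` over a path is permitted. -/
def CanSlidePath : LGraph V E → E → List E → Prop
  | _, _, [] => True
  | G, e, f :: l => G.CanSlide e f ∧ CanSlidePath (G.slide e f) e l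

/-- Each single slide is permitted and each intermediate graph is reduced. -/
def GoodSlidePath : LGraph V E → E → List E → Prop
  | _, _, [] => True
  | G, e, f :: l => G.CanSlide e f ∧ (G.slide e f).Reduced ∧ GoodSlidePath (G.slide e f) e l

/-- Perform a finite sequence of single slides, given as pairs (slid edge, edge slid over). -/
noncomputable def slideSeq : LGraph V E → List (E × E) → LGraph V E
  | G, [] => G
  | G, p :: rest => slideSeq (G.slide p.1 p.2) rest

/-- A sequence of permitted single slides, each sliding a mobile edge. -/
def MobileSlideSeq : LGraph V E → List (E × E) → Prop
  | _, [] => True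
  | G, p :: rest => G.Mobile p.1 ∧ G.CanSlide p.1 p.2 ∧ MobileSlideSeq (G.slide p.1 p.2) rest

/-- Isomorphism of labeled graphs. -/
def Isom (G : LGraph V E) (G' : LGraph V' E') : Prop :=
  ∃ (φ : V → V') (Φ : E → E'),
    Function.Bijective φ ∧ Function.Bijective Φ ∧
    (∀ x, G'.o (Φ x) = φ (G.o x)) ∧
    (∀ x, G'.bar (Φ x) = Φ (G.bar x)) ∧
    (∀ x, G'.lab (Φ x) = G.lab x)

open Classical in
/-- The result of the induction move at the loop `e` with multiplier `m`. -/
noncomputable def inductionMove (G : LGraph V E) (e : E) (m : ℤ) : LGraph V E where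
  o := G.o
  bar := G.bar
  bar_bar := G.bar_bar
  bar_ne := G.bar_ne
  lab := fun x => if x ≠ e ∧ x ≠ G.bar e ∧ G.o x = G.o e then m * G.lab x else G.lab x

/-- `G'` is obtained from `G` by a single slide move (up to isomorphism). -/
def IsSlideMove (G : LGraph V E) (G' : LGraph V' E') : Prop :=
  ∃ e f, G.CanSlide e f ∧ Isom G' (G.slide e f)

/-- `G'` is obtained from `G` by a (forward) induction move. -/
def IsInductionMove (G : LGraph V E) (G' : LGraph V' E') : Prop :=
  ∃ (e : E) (m : ℤ), G.o e = G.t e ∧ G.lab e = 1 ∧ 1 ≤ m ∧ m ∣ G.lab (G.bar e) ∧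
    Isom G' (G.inductionMove e m)

/-- `G'` is obtained from `G` by an A-move. -/
def IsAMove (G : LGraph V E) (G' : LGraph V' E') : Prop :=
  ∃ (e d : E) (e' : E') (φ : V → V') (Φ : E → E'),
    G.o e = G.t e ∧ G.lab e = 1 ∧ G.lab (G.bar e) ≠ 1 ∧
    G.o d = G.o e ∧ G.t d ≠ G.o e ∧
    G.lab d ≠ 1 ∧ G.lab (G.bar d) ≠ 1 ∧ G.lab d ∣ G.lab (G.bar e) ∧
    (∀ x : E, G.o x = G.o e → x = e ∨ x = G.bar e ∨ x = d) ∧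
    G'.o e' = φ (G.t d) ∧ G'.t e' = φ (G.t d) ∧
    G'.lab e' = G.lab (G.bar d) ∧
    G'.lab (G'.bar e') = G.lab (G.bar d) * G.lab (G.bar e) ∧
    (∀ w₁ w₂ : V, w₁ ≠ G.o e → w₂ ≠ G.o e → φ w₁ = φ w₂ → w₁ = w₂) ∧
    (∀ v' : V', ∃ w : V, w ≠ G.o e ∧ φ w = v') ∧
    (∀ x : E, x ≠ e → x ≠ G.bar e → x ≠ d → x ≠ G.bar d →
      Φ x ≠ e' ∧ Φ x ≠ G'.bar e' ∧
      G'.o (Φ x) = φ (G.o x) ∧ G'.bar (Φ x) = Φ (G.bar x) ∧ G'.lab (Φ x) = G.lab x) ∧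
    (∀ x y : E, x ≠ e → x ≠ G.bar e → x ≠ d → x ≠ G.bar d →
      y ≠ e → y ≠ G.bar e → y ≠ d → y ≠ G.bar d → Φ x = Φ y → x = y) ∧
    (∀ y : E', y ≠ e' → y ≠ G'.bar e' →
      ∃ x : E, x ≠ e ∧ x ≠ G.bar e ∧ x ≠ d ∧ x ≠ G.bar d ∧ Φ x = y)

/-- A strict ascending loop: a loop with `λ(e) = 1 ≠ λ(ē)`. -/
def HasStrictAscendingLoop (G : LGraph V E) : Prop :=
  ∃ e : E, G.o e = G.t e ∧ G.lab e = 1 ∧ G.lab (G.bar e) ≠ 1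

end LGraph

/-- A labeled graph with its vertex and edge types bundled. -/
structure BGraph where
  V : Type
  E : Type
  G : LGraph V E

/-- An elementary deformation move: a slide, an induction move or its inverse,
or an A-move or its inverse. -/
def BGraph.ElemMove (X Y : BGraph) : Prop :=
  LGraph.IsSlideMove X.G Y.G ∨ LGraph.IsInductionMove X.G Y.G ∨
  LGraph.IsInductionMove Y.G X.G ∨ LGraph.IsAMove X.G Y.G ∨ LGraph.IsAMove Y.G X.G

/-- A finite sequence of elementary moves with all intermediate graphs reduced. -/
def BGraph.MoveSeq : BGraph → BGraph → Prop :=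
  Relation.ReflTransGen (fun X Y => X.ElemMove Y ∧ Y.G.Reduced)

/-- A reduced labeled graph is non-ascending if no reduced labeled graph obtained from it
by slide, induction and A-moves (all intermediate graphs reduced) contains a
strict ascending loop. -/
def LGraph.NonAscending {V E : Type} (G : LGraph V E) : Prop :=
  ∀ Y : BGraph, BGraph.MoveSeq ⟨V, E, G⟩ Y → ¬ Y.G.HasStrictAscendingLoop

/-!
On a rose, sliding `e` along an `e`-edge path only changes the number `λ(e)`: each slide over `f`
replaces a multiple `r λ(f)` by `r λ(f̄)`. So a non-ascending rose has no strict monotone cycles: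
such a cycle would, after some slides, make one of `λ(e)` and `λ(ē)` a proper multiple of the
other, and an inverse `A`-move would then produce a strict ascending loop. Hence a mobile edge,
suitably oriented, can be slid until its label is a proper multiple of the original one.

Suppose `e` and `f` are mobile and not the two orientations of one edge. Besides them at most one
geometric edge `g` is left, and over `g` alone no label returns to a proper multiple of itself,
because `q(g)ⁿ`, `n > 0`, is an integer only if `q(g)` is. So `e` has to cross `f` and `f` has to
cross `e`, and the absence of strict monotone cycles forces `λ(e)` to be carried over `g` exactly
to `λ(f)` or `λ(f̄)`. From there every crossing of `f` takes place with factor `1`, so `e` never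
returns to a proper multiple of its label. Therefore all the slides are of a single edge.
-/

namespace LGraph

variable {V E : Type} {G : LGraph V E} {S A : Set E} {e f g w y : E} {a b m r z : ℤ}

/-- The geometric edge underlying `e`, as the set of its two orientations. -/
def pair (G : LGraph V E) (e : E) : Set E := {e, G.bar e}

theorem mem_pair_iff : f ∈ G.pair e ↔ f = e ∨ f = G.bar e := Iff.rfl

theorem self_mem_pair : e ∈ G.pair e := Or.inl rfl

theorem bar_mem_pair : G.bar e ∈ G.pair e := Or.inr rfl

theorem pair_bar : G.pair (G.bar e) = G.pair e := by
  rw [pair, G.bar_bar, Set.pair_comm, pair]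

theorem mem_pair_iff_pair_eq : f ∈ G.pair e ↔ G.pair f = G.pair e := by
  refine ⟨?_, fun h => h ▸ self_mem_pair⟩
  rintro (rfl | rfl)
  exacts [rfl, pair_bar]

theorem bar_mem_pair_iff : G.bar f ∈ G.pair e ↔ f ∈ G.pair e := by
  rw [mem_pair_iff_pair_eq, pair_bar, mem_pair_iff_pair_eq]

theorem ncard_pair : (G.pair e).ncard = 2 := Set.ncard_pair (G.bar_ne e).symm

theorem disjoint_pair (h : f ∉ G.pair e) : Disjoint (G.pair e) (G.pair f) :=
  Set.disjoint_left.2 fun _ he hf => h <| mem_pair_iff_pair_eq.2 <|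
    (mem_pair_iff_pair_eq.1 hf).symm.trans (mem_pair_iff_pair_eq.1 he)

theorem exists_compl_union_subset_pair [Finite E] (hE : Nat.card E ≤ 6) (h : f ∉ G.pair e) :
    ∃ g, (G.pair e ∪ G.pair f)ᶜ ⊆ G.pair g := by
  rcases (G.pair e ∪ G.pair f)ᶜ.eq_empty_or_nonempty with hempty | ⟨g, hg⟩
  · exact ⟨e, hempty ▸ Set.empty_subset _⟩
  have hsub : G.pair g ⊆ (G.pair e ∪ G.pair f)ᶜ := by
    rintro _ (rfl | rfl)
    · exact hg
    · simpa only [Set.mem_compl_iff, Set.mem_union, bar_mem_pair_iff] using hg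
  have hcard : (G.pair e ∪ G.pair f)ᶜ.ncard ≤ (G.pair g).ncard := by
    have hcompl := Set.ncard_add_ncard_compl (G.pair e ∪ G.pair f)
    rw [Set.ncard_union_eq (disjoint_pair h)] at hcompl
    simp only [ncard_pair] at hcompl ⊢
    omega
  exact ⟨g, (Set.eq_of_subset_of_ncard_le hsub hcard).ge⟩

/-- The effect on a label of one slide over an edge of `S`, with all origins ignored. -/
def CarryStep (G : LGraph V E) (S : Set E) (x y : ℤ) : Prop :=
  ∃ f ∈ S, ∃ r : ℤ, x = r * G.lab f ∧ y = r * G.lab (G.bar f)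

/-- The effect on a label of successive slides over edges of `S`, with all origins ignored: on a
rose this is the numerical content of an edge path in `S`. -/
def Carries (G : LGraph V E) (S : Set E) : ℤ → ℤ → Prop := Relation.ReflTransGen (G.CarryStep S)

namespace Carries

theorem refl (S : Set E) (a : ℤ) : G.Carries S a a := Relation.ReflTransGen.refl

theorem single (hf : f ∈ S) (r : ℤ) : G.Carries S (r * G.lab f) (r * G.lab (G.bar f)) :=
  Relation.ReflTransGen.single ⟨f, hf, r, rfl, rfl⟩

theorem trans {c : ℤ} (h : G.Carries S a b) (h' : G.Carries S b c) : G.Carries S a c :=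
  Relation.ReflTransGen.trans h h'

theorem mono {S' : Set E} (hS : S ⊆ S') (h : G.Carries S a b) : G.Carries S' a b :=
  Relation.ReflTransGen.mono (fun _ _ ⟨f, hf, hr⟩ => ⟨f, hS hf, hr⟩) _ _ h

theorem mul_left (c : ℤ) (h : G.Carries S a b) : G.Carries S (c * a) (c * b) := by
  refine Relation.ReflTransGen.lift (c * ·) ?_ _ _ h
  rintro _ _ ⟨f, hf, r, rfl, rfl⟩
  exact ⟨f, hf, c * r, (mul_assoc ..).symm, (mul_assoc ..).symm⟩

theorem symm (hS : ∀ f ∈ S, G.bar f ∈ S) (h : G.Carries S a b) : G.Carries S b a := by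
  have : Std.Symm (G.CarryStep S) := ⟨fun x y ⟨f, hf, r, hx, hy⟩ =>
    ⟨G.bar f, hS f hf, r, hy, by rwa [G.bar_bar]⟩⟩
  exact Relation.ReflTransGen.stdSymm.symm _ _ h

theorem pos (hp : G.Positive) (h : G.Carries S a b) (ha : 0 < a) : 0 < b := by
  induction h with
  | refl => exact ha
  | tail _ hstep ih =>
    obtain ⟨f, -, r, rfl, rfl⟩ := hstep
    exact mul_pos (pos_of_mul_pos_left ih (hp f).le) (hp _)

theorem exists_first_crossing (P : Set E) (h : G.Carries Aᶜ a b) :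
    G.Carries (A ∪ P)ᶜ a b ∨ ∃ f ∈ P, ∃ r : ℤ, G.Carries (A ∪ P)ᶜ a (r * G.lab f) := by
  induction h with
  | refl => exact Or.inl (refl ..)
  | tail _ hstep ih =>
    obtain ⟨w, hw, r, rfl, rfl⟩ := hstep
    refine ih.elim (fun ih => ?_) Or.inr
    by_cases hwP : w ∈ P
    · exact Or.inr ⟨w, hwP, r, ih⟩
    · exact Or.inl (ih.trans (single (fun h => h.elim hw hwP) r))

end Carries

theorem bar_mem_compl_union (h : w ∈ (G.pair e ∪ G.pair f)ᶜ) :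
    G.bar w ∈ (G.pair e ∪ G.pair f)ᶜ := by
  simpa only [Set.mem_compl_iff, Set.mem_union, bar_mem_pair_iff] using h

theorem exists_carries_of_path (hp : G.Positive) (l : List E) (x : ℤ) (hS : ∀ a ∈ l, a ∈ S)
    (hl : ∀ i : Fin l.length, ∃ k : ℤ,
      (x : ℚ) * G.q (l.take i.1) = (k : ℚ) * (G.lab (l.get i) : ℚ)) :
    ∃ z : ℤ, (z : ℚ) = x * G.q l ∧ G.Carries S x z := by
  induction l generalizing x with
  | nil => exact ⟨x, by simp [q], .refl ..⟩
  | cons f l ih =>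
    obtain ⟨r, hr⟩ := hl ⟨0, by simp⟩
    obtain rfl : x = r * G.lab f := by
      simp only [q, List.take_zero, List.map_nil, List.prod_nil, mul_one, List.get_eq_getElem,
        List.getElem_cons_zero] at hr
      exact_mod_cast hr
    have hf : (G.lab f : ℚ) ≠ 0 := by exact_mod_cast (hp f).ne'
    have hcross (l' : List E) : ((r * G.lab f : ℤ) : ℚ) * G.q (f :: l') =
        ((r * G.lab (G.bar f) : ℤ) : ℚ) * G.q l' := by
      simp only [q, qe, List.map_cons, List.prod_cons]
      push_cast
      field_simp
    obtain ⟨z, hz, hcarry⟩ := ih (r * G.lab (G.bar f)) (fun a ha => hS a (by simp [ha]))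
      fun i => (hl i.succ).imp fun k hk => (hcross _).symm.trans hk
    exact ⟨z, hz.trans (hcross l).symm, (Carries.single (hS f (by simp)) r).trans hcarry⟩

theorem IsEEdgePath.exists_carries (hp : G.Positive) {l : List E} (h : G.IsEEdgePath e l) :
    ∃ z : ℤ, (z : ℚ) = G.lab e * G.q l ∧ G.Carries (G.pair e)ᶜ (G.lab e) z :=
  exists_carries_of_path hp l _ (fun a ha => not_or.2 (h.2.1 a ha)) h.2.2.2

open Classical in
/-- `G` with the label of `y` replaced by `z`. On a rose every slide has this form. -/
noncomputable def relabel (G : LGraph V E) (y : E) (z : ℤ) : LGraph V E :=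
  { G with lab := Function.update G.lab y z }

theorem relabel_lab_self : (G.relabel y z).lab y = z := by
  simp only [relabel, Function.update_self]

theorem relabel_lab_of_ne (h : w ≠ y) : (G.relabel y z).lab w = G.lab w := by
  simp only [relabel, ne_eq, h, not_false_eq_true, Function.update_of_ne]

theorem relabel_lab_eq_self : G.relabel y (G.lab y) = G := by
  simp only [relabel, Function.update_eq_self]

theorem relabel_relabel : (G.relabel y a).relabel y b = G.relabel y b := by
  simp only [relabel, Function.update_idem]

theorem Positive.relabel (hp : G.Positive) (hz : 0 < z) : (G.relabel y z).Positive := by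
  intro w
  rcases eq_or_ne w y with rfl | hw
  · rwa [relabel_lab_self]
  · rw [relabel_lab_of_ne hw]
    exact hp w

theorem Carries.relabel (h : G.Carries (G.pair e)ᶜ a b) (hy : y ∈ G.pair e) :
    (G.relabel y z).Carries (G.pair e)ᶜ a b := by
  refine Relation.ReflTransGen.mono ?_ _ _ h
  rintro _ _ ⟨f, hf, r, rfl, rfl⟩
  have hlab {w : E} (hw : w ∉ G.pair e) : (G.relabel y z).lab w = G.lab w :=
    relabel_lab_of_ne fun h => hw (h ▸ hy)
  refine ⟨f, hf, r, by rw [hlab hf], ?_⟩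
  change _ = r * (G.relabel y z).lab (G.bar f)
  rw [hlab (bar_mem_pair_iff.not.2 hf)]

theorem reduced_of_subsingleton [Subsingleton V] (G : LGraph V E) : G.Reduced :=
  fun _ _ => Subsingleton.elim _ _

theorem slide_eq_relabel [Subsingleton V] (hp : G.Positive) (h : G.lab e = r * G.lab f) :
    G.slide e f = G.relabel e (r * G.lab (G.bar f)) := by
  have hlab : G.lab e * G.lab (G.bar f) / G.lab f = r * G.lab (G.bar f) := by
    rw [h, mul_right_comm, Int.mul_ediv_cancel _ (hp f).ne']
  simp only [slide, relabel, hlab, LGraph.mk.injEq, true_and]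
  refine ⟨Subsingleton.elim _ _, funext fun w => ?_⟩
  simp only [Function.update_apply]

theorem CanSlide.exists_slide_eq_relabel [Subsingleton V] (hp : G.Positive)
    (h : G.CanSlide e f) :
    ∃ z, G.Carries (G.pair e)ᶜ (G.lab e) z ∧ G.slide e f = G.relabel e z := by
  obtain ⟨hfe, hfe', -, r, hr⟩ := h
  rw [mul_comm] at hr
  exact ⟨r * G.lab (G.bar f), hr ▸ .single (not_or.2 ⟨hfe, hfe'⟩) r, slide_eq_relabel hp hr⟩

theorem Positive.slide [Subsingleton V] (hp : G.Positive) (h : G.CanSlide e f) :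
    (G.slide e f).Positive := by
  obtain ⟨z, hz, heq⟩ := h.exists_slide_eq_relabel hp
  exact heq ▸ hp.relabel (hz.pos hp (hp e))

theorem Isom.refl (G : LGraph V E) : Isom G G :=
  ⟨id, id, Function.bijective_id, Function.bijective_id, fun _ => rfl, fun _ => rfl, fun _ => rfl⟩

theorem NonAscending.slide (hna : G.NonAscending) (h : G.CanSlide e f)
    (hred : (G.slide e f).Reduced) : (G.slide e f).NonAscending :=
  fun Y hY => hna Y (hY.head ⟨Or.inl ⟨e, f, h, .refl _⟩, hred⟩)

theorem NonAscending.relabel [Subsingleton V] (hp : G.Positive) (hna : G.NonAscending)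
    (h : G.Carries (G.pair y)ᶜ (G.lab y) z) : (G.relabel y z).NonAscending := by
  induction h with
  | refl => rwa [relabel_lab_eq_self]
  | tail hcarry hstep ih =>
    obtain ⟨f, hf, r, rfl, rfl⟩ := hstep
    have hlab {w : E} (hw : w ∉ G.pair y) : (G.relabel y (r * G.lab f)).lab w = G.lab w :=
      relabel_lab_of_ne fun h => hw (h ▸ self_mem_pair)
    have hself : (G.relabel y (r * G.lab f)).lab y = r * (G.relabel y (r * G.lab f)).lab f := by
      rw [relabel_lab_self, hlab hf]
    have hslide : (G.relabel y (r * G.lab f)).slide y f = G.relabel y (r * G.lab (G.bar f)) := by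
      rw [slide_eq_relabel (hp.relabel (Carries.pos hp hcarry (hp y))) hself, relabel_relabel]
      exact congrArg (fun c => G.relabel y (r * c)) (hlab (bar_mem_pair_iff.not.2 hf))
    exact hslide ▸ ih.slide ⟨fun h => hf (Or.inl h), fun h => hf (Or.inr h),
      Subsingleton.elim _ _, hself ▸ dvd_mul_left _ _⟩ (reduced_of_subsingleton _)

open Classical in
/-- The result of the inverse `A`-move that pushes the loop `y` to a new vertex `none`, giving it
the labels `1` and `m`; the new vertex is joined to the old one by the edge `Sum.inr true`, whose
reverse is `Sum.inr false`. -/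
noncomputable def inverseAMove (G : LGraph V E) (y : E) (m : ℤ) :
    LGraph (Option V) (E ⊕ Bool) where
  o := Sum.elim (fun w => if w ∈ G.pair y then none else some (G.o w))
    fun b => if b then none else some (G.o y)
  bar := Sum.map G.bar not
  bar_bar := by rintro (w | b) <;> simp [G.bar_bar]
  bar_ne := by rintro (w | b) <;> simp [G.bar_ne]
  lab := Sum.elim (fun w => if w = y then 1 else if w = G.bar y then m else G.lab w)
    fun b => if b then m else G.lab y

theorem inverseAMove_hasStrictAscendingLoop (hm : m ≠ 1) :
    (G.inverseAMove y m).HasStrictAscendingLoop := by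
  refine ⟨Sum.inl y, ?_, ?_, ?_⟩
  · simp [inverseAMove, t, self_mem_pair, bar_mem_pair]
  · simp [inverseAMove]
  · simpa [inverseAMove, G.bar_ne y] using hm

theorem inverseAMove_reduced (hred : G.Reduced) (hy : G.lab y ≠ 1) (hm : m ≠ 1) :
    (G.inverseAMove y m).Reduced := by
  rintro (w | b) hw
  · by_cases hwy : w ∈ G.pair y
    · simp [inverseAMove, t, hwy, bar_mem_pair_iff]
    · have hlab : G.lab w = 1 := by
        obtain ⟨hwy₁, hwy₂⟩ := not_or.1 (mem_pair_iff.not.1 hwy)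
        simpa [inverseAMove, hwy₁, hwy₂] using hw
      simp [inverseAMove, t, hwy, bar_mem_pair_iff, hred w hlab]
  · cases b
    · exact absurd hw hy
    · exact absurd hw hm

theorem isAMove_inverseAMove (hloop : G.o y = G.t y) (h : G.lab (G.bar y) = m * G.lab y)
    (hy : G.lab y ≠ 1) (hm : m ≠ 1) : (G.inverseAMove y m).IsAMove G := by
  refine ⟨Sum.inl y, Sum.inr true, y, (Option.getD · (G.o y)), Sum.elim id fun _ => y,
    ?_, ?_, ?_, ?_, ?_, ?_, ?_, ?_, ?_, ?_, ?_, ?_, ?_, ?_, ?_, ?_, ?_, ?_⟩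
  · simp [inverseAMove, t, self_mem_pair, bar_mem_pair]
  · simp [inverseAMove]
  · simpa [inverseAMove, G.bar_ne y] using hm
  · simp [inverseAMove, self_mem_pair]
  · simp [inverseAMove, t, self_mem_pair]
  · simpa [inverseAMove] using hm
  · simpa [inverseAMove] using hy
  · simp [inverseAMove, G.bar_ne y]
  · rintro (w | b) hw
    · simpa [inverseAMove, self_mem_pair, mem_pair_iff, or_iff_not_imp_left] using hw
    · simpa [inverseAMove, self_mem_pair] using hw
  · simp [inverseAMove, t]
  · simpa [inverseAMove, t] using hloop.symm
  · simp [inverseAMove]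
  · simp [inverseAMove, G.bar_ne y, h, mul_comm]
  · rintro (_ | v) (_ | v') <;> simp [inverseAMove, self_mem_pair]
  · exact fun v => ⟨some v, by simp [inverseAMove, self_mem_pair]⟩
  · rintro (w | b) <;> simp +contextual [inverseAMove, mem_pair_iff]
  · rintro (w | b) (w' | b') <;> simp +contextual [inverseAMove]
  · exact fun w hw hw' => ⟨Sum.inl w, by simpa [inverseAMove] using ⟨hw, hw'⟩⟩

theorem NonAscending.eq_one_of_lab_bar_eq_mul (hna : G.NonAscending) (hred : G.Reduced)
    (hloop : G.o y = G.t y) (h : G.lab (G.bar y) = m * G.lab y) : m = 1 := by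
  by_contra hm
  by_cases hy : G.lab y = 1
  · refine hna _ .refl ⟨y, hloop, hy, ?_⟩
    change G.lab (G.bar y) ≠ 1
    rwa [h, hy, mul_one]
  · refine hna ⟨_, _, G.inverseAMove y m⟩ (.single ⟨?_, inverseAMove_reduced hred hy hm⟩)
      (inverseAMove_hasStrictAscendingLoop hm)
    exact Or.inr <| Or.inr <| Or.inr <| Or.inr <| isAMove_inverseAMove hloop h hy hm

/-- The numerical form of a strict `e`-integer cycle: on a rose the label of `e` can be carried to
a proper multiple of itself over the other edges. -/
def HasIntegerCycle (G : LGraph V E) (e : E) : Prop :=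
  ∃ k : ℤ, k ≠ 1 ∧ G.Carries (G.pair e)ᶜ (G.lab e) (k * G.lab e)

theorem IsStrictIntegerCycle.hasIntegerCycle (hp : G.Positive) {l : List E}
    (h : G.IsStrictIntegerCycle e l) : G.HasIntegerCycle e := by
  obtain ⟨hpath, -, -, ⟨k, hk⟩, hne⟩ := h
  obtain ⟨z, hz, hcarry⟩ := hpath.exists_carries hp
  obtain rfl : z = k * G.lab e := by
    rw [hk, mul_comm] at hz
    exact_mod_cast hz
  refine ⟨k, ?_, hcarry⟩
  rintro rfl
  exact hne (by rw [hk, Int.cast_one])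

theorem Carries.exists_pow_mul_pow_eq (hS : S ⊆ G.pair g) (h : G.Carries S a b) :
    ∃ i j : ℕ, b * (G.lab g ^ i * G.lab (G.bar g) ^ j) =
      a * (G.lab (G.bar g) ^ i * G.lab g ^ j) := by
  induction h with
  | refl => exact ⟨0, 0, by simp⟩
  | tail _ hstep ih =>
    obtain ⟨i, j, hij⟩ := ih
    obtain ⟨w, hw, r, rfl, rfl⟩ := hstep
    rcases hS hw with rfl | rfl
    · exact ⟨i + 1, j, by linear_combination G.lab (G.bar w) * hij⟩
    · refine ⟨i, j + 1, ?_⟩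
      rw [G.bar_bar]
      linear_combination G.lab g * hij

section OneVertex

variable [Subsingleton V]

theorem NonAscending.eq_one_of_carries_bar (hp : G.Positive) (hna : G.NonAscending)
    (h : G.Carries (G.pair y)ᶜ (G.lab y) (m * G.lab (G.bar y))) : m = 1 := by
  refine (hna.relabel hp h).eq_one_of_lab_bar_eq_mul (y := G.bar y)
    (reduced_of_subsingleton _) (Subsingleton.elim _ _) ?_
  change (G.relabel y _).lab (G.bar (G.bar y)) = _
  rw [G.bar_bar, relabel_lab_self, relabel_lab_of_ne (G.bar_ne y)]

theorem NonAscending.eq_one_of_mul_lab_pow (hp : G.Positive) (hna : G.NonAscending) {n : ℕ}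
    (h : m * G.lab g ^ n = G.lab (G.bar g) ^ n) : m = 1 := by
  rcases eq_or_ne n 0 with rfl | hn
  · simpa using h
  obtain ⟨j, hj⟩ := (Int.pow_dvd_pow_iff hn).1 (Dvd.intro_left m h)
  rw [mul_comm] at hj
  obtain rfl := hna.eq_one_of_lab_bar_eq_mul (reduced_of_subsingleton G)
    (Subsingleton.elim _ _) hj
  rw [hj, one_mul] at h
  exact mul_right_cancel₀ (pow_ne_zero n (hp g).ne') (h.trans (one_mul _).symm)

theorem NonAscending.eq_one_of_carries_mul (hp : G.Positive) (hna : G.NonAscending)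
    (hS : S ⊆ G.pair g) (ha : a ≠ 0) (h : G.Carries S a (m * a)) : m = 1 := by
  obtain ⟨i, j, hij⟩ := h.exists_pow_mul_pow_eq hS
  have hij' : m * (G.lab g ^ i * G.lab (G.bar g) ^ j) = G.lab (G.bar g) ^ i * G.lab g ^ j :=
    mul_left_cancel₀ ha (by linear_combination hij)
  have hne (w : E) (n : ℕ) : G.lab w ^ n ≠ 0 := pow_ne_zero n (hp w).ne'
  rcases le_total j i with hle | hle <;> obtain ⟨n, rfl⟩ := Nat.exists_eq_add_of_le hle
  · refine hna.eq_one_of_mul_lab_pow (g := g) (n := n) hp ?_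
    refine mul_left_cancel₀ (mul_ne_zero (hne g j) (hne (G.bar g) j)) ?_
    linear_combination hij'
  · refine hna.eq_one_of_mul_lab_pow (g := G.bar g) (n := n) hp ?_
    rw [G.bar_bar]
    refine mul_left_cancel₀ (mul_ne_zero (hne g i) (hne (G.bar g) i)) ?_
    linear_combination hij'

theorem NonAscending.eq_one_of_carries_mul_lab (hp : G.Positive) (hna : G.NonAscending)
    (hS : S ⊆ G.pair g) (hSf : S ⊆ (G.pair f)ᶜ) (hw : w ∈ G.pair f)
    (h : G.Carries S (G.lab f) (m * G.lab w)) : m = 1 := by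
  rcases hw with rfl | rfl
  · exact hna.eq_one_of_carries_mul hp hS (hp w).ne' h
  · exact hna.eq_one_of_carries_bar hp (h.mono hSf)

theorem Carries.exists_mem_pair_carries (hp : G.Positive) (hna : G.NonAscending)
    (hg : (A ∪ G.pair f)ᶜ ⊆ G.pair g) (h : G.Carries Aᶜ (G.lab f) z) :
    ∃ f' ∈ G.pair f, G.Carries (A ∪ G.pair f)ᶜ (G.lab f') z := by
  induction h with
  | refl => exact ⟨f, self_mem_pair, .refl ..⟩
  | tail _ hstep ih =>
    obtain ⟨w, hw, r, rfl, rfl⟩ := hstep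
    obtain ⟨f', hf', hcarry⟩ := ih
    by_cases hwf : w ∈ G.pair f
    · have hpair := mem_pair_iff_pair_eq.1 hf'
      have hsub : (A ∪ G.pair f)ᶜ ⊆ (G.pair f')ᶜ :=
        hpair ▸ Set.compl_subset_compl.2 Set.subset_union_right
      obtain rfl := hna.eq_one_of_carries_mul_lab hp hg hsub (hpair ▸ hwf) hcarry
      exact ⟨G.bar w, bar_mem_pair_iff.2 hwf, (one_mul (G.lab (G.bar w))).symm ▸ .refl ..⟩
    · exact ⟨f', hf', hcarry.trans (.single (fun h => h.elim hw hwf) r)⟩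

theorem NonAscending.not_isStrictMonotoneCycle (hp : G.Positive) (hna : G.NonAscending)
    {l : List E} : ¬ G.IsStrictMonotoneCycle l e := by
  rintro ⟨⟨hpath, -, k, hk⟩, hne⟩
  obtain ⟨z, hz, hcarry⟩ := hpath.exists_carries hp
  have he : (G.lab e : ℚ) ≠ 0 := by exact_mod_cast (hp e).ne'
  obtain rfl : z = k * G.lab e := by
    have hq : G.q (l ++ [e]) = G.q l * (G.lab (G.bar e) / G.lab e) := by simp [q, qe]
    have : (z : ℚ) = k * G.lab e := by
      rw [hz, ← hk, hq]
      field_simp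
    exact_mod_cast this
  obtain rfl := hna.eq_one_of_carries_bar (y := G.bar e) (m := k) hp (by rwa [G.bar_bar])
  exact hne (by rw [hk, Int.cast_one])

theorem Mobile.exists_hasIntegerCycle (hp : G.Positive) (hna : G.NonAscending)
    (h : G.Mobile e) : ∃ e' ∈ G.pair e, G.HasIntegerCycle e' := by
  rcases h with ⟨l, h | h⟩ | ⟨l, h | h⟩
  · exact (hna.not_isStrictMonotoneCycle hp h).elim
  · exact (hna.not_isStrictMonotoneCycle hp h).elim
  · exact ⟨e, self_mem_pair, h.hasIntegerCycle hp⟩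
  · exact ⟨G.bar e, bar_mem_pair, h.hasIntegerCycle hp⟩

namespace HasIntegerCycle

theorem exists_carries_mul_lab (hp : G.Positive) (hna : G.NonAscending)
    (hg : (G.pair e ∪ G.pair f)ᶜ ⊆ G.pair g) (he : G.HasIntegerCycle e) :
    ∃ f' ∈ G.pair f, ∃ r : ℤ, G.Carries (G.pair e ∪ G.pair f)ᶜ (G.lab e) (r * G.lab f') := by
  obtain ⟨k, hk, hcycle⟩ := he
  refine (hcycle.exists_first_crossing (G.pair f)).resolve_left fun h => hk ?_
  exact hna.eq_one_of_carries_mul hp hg (hp e).ne' h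

theorem not_carries_lab (hp : G.Positive) (hna : G.NonAscending)
    (hg : (G.pair e ∪ G.pair f)ᶜ ⊆ G.pair g) (he : G.HasIntegerCycle e) :
    ¬ G.Carries (G.pair e ∪ G.pair f)ᶜ (G.lab e) (G.lab f) := by
  intro hef
  obtain ⟨k, hk, hcycle⟩ := he
  have hfe := hef.symm fun _ => bar_mem_compl_union
  have hfk := (hfe.mono (Set.compl_subset_compl.2 Set.subset_union_left)).trans hcycle
  obtain ⟨f', hf', hcarry⟩ := hfk.exists_mem_pair_carries hp hna hg
  have hpair := mem_pair_iff_pair_eq.1 hf'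
  have hsub : (G.pair e ∪ G.pair f)ᶜ ⊆ (G.pair f')ᶜ :=
    hpair ▸ Set.compl_subset_compl.2 Set.subset_union_right
  exact hk <| hna.eq_one_of_carries_mul_lab hp hg hsub (hpair ▸ self_mem_pair)
    (hcarry.trans (hef.mul_left k))

theorem mem_pair_of_compl_subset_pair (hp : G.Positive) (hna : G.NonAscending)
    (hg : (G.pair e ∪ G.pair f)ᶜ ⊆ G.pair g) (he : G.HasIntegerCycle e)
    (hf : G.HasIntegerCycle f) : f ∈ G.pair e := by
  by_contra hfe
  obtain ⟨f', hf', r, her⟩ := he.exists_carries_mul_lab hp hna hg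
  obtain ⟨e', he', s, hfs⟩ := hf.exists_carries_mul_lab hp hna (Set.union_comm .. ▸ hg)
  rw [Set.union_comm] at hfs
  have hsube : (G.pair e ∪ G.pair f)ᶜ ⊆ (G.pair e)ᶜ :=
    Set.compl_subset_compl.2 Set.subset_union_left
  have hsubf : (G.pair e ∪ G.pair f)ᶜ ⊆ (G.pair f)ᶜ :=
    Set.compl_subset_compl.2 Set.subset_union_right
  have hrs : r * s = 1 := by
    rcases hf' with rfl | rfl
    · refine hna.eq_one_of_carries_mul_lab hp hg hsube he' ?_
      rw [mul_assoc]
      exact her.trans (hfs.mul_left r)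
    rcases he' with rfl | rfl
    · refine hna.eq_one_of_carries_mul_lab hp hg hsubf bar_mem_pair ?_
      rw [mul_comm r, mul_assoc]
      exact hfs.trans (her.mul_left s)
    · refine hna.eq_one_of_carries_bar (y := e) hp ?_
      have hcross := Carries.single (G := G) (S := (G.pair e)ᶜ) (bar_mem_pair_iff.not.2 hfe) r
      rw [G.bar_bar] at hcross
      rw [mul_assoc]
      exact ((her.mono hsube).trans hcross).trans ((hfs.mono hsube).mul_left r)
  have hr : 0 < r := pos_of_mul_pos_left (her.pos hp (hp e)) (hp f').le
  obtain rfl : r = 1 := Int.eq_one_of_mul_eq_one_right hr.le hrs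
  have hpair := mem_pair_iff_pair_eq.1 hf'
  rw [← hpair] at hg her
  rw [one_mul] at her
  exact he.not_carries_lab hp hna hg her

theorem mem_pair [Finite E] (hE : Nat.card E ≤ 6) (hp : G.Positive) (hna : G.NonAscending)
    (he : G.HasIntegerCycle e) (hf : G.HasIntegerCycle f) : f ∈ G.pair e := by
  by_contra hfe
  obtain ⟨g, hg⟩ := exists_compl_union_subset_pair hE hfe
  exact hfe (he.mem_pair_of_compl_subset_pair hp hna hg hf)

theorem slide (hp : G.Positive) (he : G.HasIntegerCycle e) (hw : w ∈ G.pair e)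
    (h : G.CanSlide w f) : (G.slide w f).HasIntegerCycle e := by
  obtain ⟨k, hk, hcycle⟩ := he
  obtain ⟨z, hz, heq⟩ := h.exists_slide_eq_relabel hp
  rw [heq]
  refine ⟨k, hk, Carries.relabel ?_ hw⟩
  rcases hw with rfl | rfl
  · rw [relabel_lab_self]
    have hz' : G.Carries (G.pair w)ᶜ z (G.lab w) := hz.symm fun _ => bar_mem_pair_iff.not.2
    exact (hz'.trans hcycle).trans (hz.mul_left k)
  · rwa [relabel_lab_of_ne (G.bar_ne e).symm]

theorem fst_mem_pair [Finite E] (hE : Nat.card E ≤ 6) (hp : G.Positive) (hna : G.NonAscending)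
    (he : G.HasIntegerCycle e) {s : List (E × E)} (hs : G.MobileSlideSeq s) :
    ∀ p ∈ s, p.1 ∈ G.pair e := by
  induction s generalizing G with
  | nil => simp
  | cons p s ih =>
    obtain ⟨hmob, hslide, hs⟩ := hs
    obtain ⟨e', he', hcycle⟩ := hmob.exists_hasIntegerCycle hp hna
    have hpe : p.1 ∈ G.pair e := by
      rw [mem_pair_iff_pair_eq, ← mem_pair_iff_pair_eq.1 he', ← mem_pair_iff_pair_eq]
      exact he.mem_pair hE hp hna hcycle
    refine List.forall_mem_cons.2 ⟨hpe, ?_⟩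
    exact ih (G := G.slide p.1 p.2) (hp.slide hslide) (hna.slide hslide (reduced_of_subsingleton _))
      (he.slide hp hpe hslide) hs

end HasIntegerCycle

theorem MobileSlideSeq.fst_mem_pair [Finite E] (hE : Nat.card E ≤ 6) (hp : G.Positive)
    (hna : G.NonAscending) {p : E × E} {s : List (E × E)} (hs : G.MobileSlideSeq (p :: s)) :
    ∀ p' ∈ p :: s, p'.1 ∈ G.pair p.1 := by
  obtain ⟨e, he, hcycle⟩ := hs.1.exists_hasIntegerCycle hp hna
  rw [← mem_pair_iff_pair_eq.1 he]
  exact hcycle.fst_mem_pair hE hp hna hs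

end OneVertex

theorem flatten_ofFn_ite_nil {α : Type*} {k : ℕ} (j : Fin k) (l : List α) :
    (List.ofFn fun i => if i = j then l else []).flatten = l := by
  induction k with
  | zero => exact j.elim0
  | succ k ih =>
    rw [List.ofFn_succ, List.flatten_cons]
    cases j using Fin.cases with
    | zero => simp [Fin.succ_ne_zero]
    | succ j => simp [(Fin.succ_ne_zero j).symm, ih j]

end LGraph

/-- (Proposition 4.6) Let `Γ` be a non-ascending `n`-rose (`n ≤ 3`) with
positive labels whose mobile edges, up to orientation, are exactly `es 0, …, es (k-1)`.
If `Γ'` is obtained from `Γ` by a finite sequence of single slides of mobile edges, then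
`Γ'` is also obtained by such a sequence decomposing into `k` consecutive blocks, the `j`-th
block sliding only the edges `es j` and its reverse. -/
theorem stmt17 {V E : Type} [Finite V] [Finite E] (G : LGraph V E) (n : ℕ)
    (hn : n ≤ 3) (hrose : G.IsRose n) (hpos : G.Positive) (hna : G.NonAscending)
    (k : ℕ) (es : Fin k → E)
    (hmob : ∀ i, G.Mobile (es i))
    (hinj : Function.Injective es)
    (hbar : ∀ i j, es i ≠ G.bar (es j))
    (hall : ∀ x : E, G.Mobile x → ∃ i, x = es i ∨ x = G.bar (es i))
    (s : List (E × E)) (hs : G.MobileSlideSeq s) :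
    ∃ blocks : Fin k → List (E × E),
      G.MobileSlideSeq (List.ofFn blocks).flatten ∧
      G.slideSeq (List.ofFn blocks).flatten = G.slideSeq s ∧
      ∀ j : Fin k, ∀ p ∈ blocks j, p.1 = es j ∨ p.1 = G.bar (es j) := by
  obtain ⟨hV, hcard⟩ := hrose
  have : Subsingleton V := (Nat.card_eq_one_iff_unique.1 hV).1
  cases s with
  | nil => exact ⟨fun _ => [], by simpa using hs, by simp, by simp⟩
  | cons p s =>
    obtain ⟨j, hj⟩ := hall p.1 hs.1
    have hpair := LGraph.mem_pair_iff_pair_eq.1 hj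
    have hfst := hs.fst_mem_pair (by omega) hpos hna
    refine ⟨fun i => if i = j then p :: s else [], ?_, ?_, fun i p' hp' => ?_⟩
    · rwa [LGraph.flatten_ofFn_ite_nil]
    · rw [LGraph.flatten_ofFn_ite_nil]
    · by_cases hij : i = j
      · subst hij
        rw [← LGraph.mem_pair_iff, ← hpair]
        exact hfst p' (by simpa using hp')
      · simp [hij] at hp'
end

section
/- Let Γ be an n-rose labeled graph with all labels positive such that either (a) exactly one pair {e, ē} of edges of Γ is mobile, or (b) n ≤ 3. Suppose Γ contains a strict monotone cycle, and let Γ′ be a reduced labeled graph obtained from Γ by a finite sequence of slide, induction and A^{±1}-moves with all intermediate labeled graphs reduced. Then Γ′ contains a strict monotone cycle. -/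
/-! A point `(v, a)` stands for the element `g_v ^ a` of the associated generalized
Baumslag–Solitar group, and crossing edges conjugates points into each other. Preorder the points
by declaring that `p` dominates `q` if some path of crossings leads from `p` to a multiple of `q`.
Slide, induction and A-moves induce maps of points which are mutually inverse up to reachability,
so they preserve everything that is phrased in terms of this preorder; the number of edges minus
the number of vertices in a class of the preorder is preserved as well.

Call `p` a self-multiple if it reaches a proper multiple of itself. Suppose first that the class of
a self-multiple is tight: none of its points reaches a proper multiple of itself strictly below the
class. A shortest closed walk through the edges of the class which realizes the multiple crosses
its first edge only once, and thus gives a strict monotone cycle. Suppose next that the class is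
rooted: all its points at vertices which carry no generator of the class dominate one base point
`z` strictly below the class. If there were no strict monotone cycle, the edges of the class would
form a tree rooted at `z`, with at most one vertex of the class beyond each edge, so there would
not be more edges than vertices.

Both properties are invariant under the moves, and a rose as in the theorem has one of them. If no
edges other than `e` and `ē` are self-multiples, where `e` closes a strict monotone cycle, then the
class of `e` is tight or rooted. Otherwise two pairs of edges are mobile, so `n ≤ 3` and a minimal
class of self-multiples has at most one loop below it; that loop is no self-multiple, hence the
class is tight. -/

namespace LGraph

variable {V E V' E' : Type}

/-- A pair of a vertex `v` and a positive integer `a`. It stands for the power `g_v ^ a` of the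
generator at `v` of the associated generalized Baumslag–Solitar group, up to sign. -/
@[ext]
structure Point (V : Type) where
  vertex : V
  exponent : ℕ+

namespace Point

instance : MulAction ℕ+ (Point V) where
  smul k p := ⟨p.vertex, k * p.exponent⟩
  one_smul _ := Point.ext rfl (one_mul _)
  mul_smul _ _ _ := Point.ext rfl (mul_assoc _ _ _)

@[simp] theorem vertex_smul (k : ℕ+) (p : Point V) : (k • p).vertex = p.vertex := rfl

@[simp] theorem exponent_smul (k : ℕ+) (p : Point V) :
    (k • p).exponent = k * p.exponent := rfl

theorem smul_right_cancel {k m : ℕ+} {p : Point V} (h : k • p = m • p) : k = m :=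
  mul_right_cancel (congrArg exponent h)

/-- The point of exponent one at a vertex, standing for the generator of its vertex group. -/
def gen (v : V) : Point V := ⟨v, 1⟩

theorem exponent_smul_gen (p : Point V) : p.exponent • gen p.vertex = p :=
  Point.ext rfl (mul_one _)

end Point

/-- The absolute value of an integer as a positive natural number, with the junk value `1`
at `0`. -/
def posNatAbs (z : ℤ) : ℕ+ := z.natAbs.toPNat'

theorem coe_posNatAbs {z : ℤ} (hz : z ≠ 0) : (posNatAbs z : ℤ) = |z| := by
  rw [posNatAbs, Nat.toPNat'_coe, if_pos (Int.natAbs_pos.2 hz), Int.natCast_natAbs]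

theorem posNatAbs_mul {a b : ℤ} (ha : a ≠ 0) (hb : b ≠ 0) :
    posNatAbs (a * b) = posNatAbs a * posNatAbs b := by
  have h : (posNatAbs (a * b) : ℤ) = posNatAbs a * posNatAbs b := by
    rw [coe_posNatAbs (mul_ne_zero ha hb), coe_posNatAbs ha, coe_posNatAbs hb, abs_mul]
  exact PNat.eq (by exact_mod_cast h)

/-- The modulus `|λ(e)|` of a label. -/
def absLab (G : LGraph V E) (e : E) : ℕ+ := posNatAbs (G.lab e)

/-- The point `(o(e), |λ(e)|)` at which the oriented edge `e` is attached. -/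
def pt (G : LGraph V E) (e : E) : Point V := ⟨G.o e, G.absLab e⟩

/-- One crossing of an edge of `S`: in the generalized Baumslag–Solitar group, `g_v ^ λ(e)` and
`g_w ^ λ(ē)` are conjugate when `e` runs from `v` to `w`, and so are their common powers. -/
def Step (G : LGraph V E) (S : Set E) (p q : Point V) : Prop :=
  ∃ e ∈ S, ∃ k : ℕ+, p = k • G.pt e ∧ q = k • G.pt (G.bar e)

/-- Reachability of points by crossings of edges of `S`. -/
def Reach (G : LGraph V E) (S : Set E) : Point V → Point V → Prop :=
  Relation.ReflTransGen (G.Step S)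

/-- Edge sets stable under reversal. -/
def BarClosed (G : LGraph V E) (S : Set E) : Prop := ∀ e ∈ S, G.bar e ∈ S

/-- `p` reaches a multiple of `q` by crossings of edges of `S`. This is a preorder on points; its
classes for `S = univ` are the classes the argument is about. -/
def Dom (G : LGraph V E) (S : Set E) (p q : Point V) : Prop := ∃ k : ℕ+, G.Reach S p (k • q)

/-- `p` reaches a proper multiple of itself by crossings of edges of `S`. -/
def SelfMultiple (G : LGraph V E) (S : Set E) (p : Point V) : Prop :=
  ∃ k : ℕ+, k ≠ 1 ∧ G.Reach S p (k • p)

/-- All oriented edges other than `e` and `ē`. -/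
def without (G : LGraph V E) (e : E) : Set E := {f | f ≠ e ∧ f ≠ G.bar e}

variable {G : LGraph V E} {S T : Set E} {p q r c c' : Point V} {e f : E} {k m : ℕ+}

theorem bar_injective : Function.Injective G.bar :=
  Function.LeftInverse.injective G.bar_bar

namespace BarClosed

theorem univ : G.BarClosed Set.univ := fun _ _ => trivial

theorem inter (hS : G.BarClosed S) (hT : G.BarClosed T) : G.BarClosed (S ∩ T) :=
  fun e he => ⟨hS e he.1, hT e he.2⟩

theorem bar_mem_iff (hS : G.BarClosed S) : G.bar e ∈ S ↔ e ∈ S :=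
  ⟨fun h => G.bar_bar e ▸ hS _ h, hS e⟩

end BarClosed

theorem barClosed_without (e : E) : G.BarClosed (G.without e) := fun _ hf =>
  ⟨fun h => hf.2 (by rw [← h, G.bar_bar]), fun h => hf.1 (bar_injective h)⟩

theorem without_bar (e : E) : G.without (G.bar e) = G.without e := by
  ext f
  simp only [without, Set.mem_ofPred_eq, G.bar_bar, and_comm]

theorem eq_or_eq_bar_of_notMem_without (h : f ∉ G.without e) : f = e ∨ f = G.bar e := by
  by_contra! hf
  exact h hf

namespace Reach

theorem refl (p : Point V) : G.Reach S p p := Relation.ReflTransGen.refl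

theorem trans (h : G.Reach S p q) (h' : G.Reach S q r) : G.Reach S p r :=
  Relation.ReflTransGen.trans h h'

theorem tail_smul (h : G.Reach S p (k • G.pt e)) (he : e ∈ S) :
    G.Reach S p (k • G.pt (G.bar e)) :=
  Relation.ReflTransGen.tail h ⟨e, he, k, rfl, rfl⟩

theorem mono (hST : S ⊆ T) (h : G.Reach S p q) : G.Reach T p q :=
  Relation.ReflTransGen.mono
    (fun _ _ ⟨e, he, k, hp, hq⟩ => ⟨e, hST he, k, hp, hq⟩) _ _ h

@[elab_as_elim]
theorem crossing_induction {motive : ∀ q, G.Reach S p q → Prop} (h : G.Reach S p q)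
    (refl : motive p (refl p))
    (cross : ∀ (e : E) (he : e ∈ S) (k : ℕ+) (h : G.Reach S p (k • G.pt e)),
      motive _ h → motive _ (h.tail_smul he)) : motive q h := by
  induction h with
  | refl => exact refl
  | tail h hstep ih =>
    obtain ⟨e, he, k, rfl, rfl⟩ := hstep
    exact cross e he k h ih

theorem edge (he : e ∈ S) : G.Reach S (G.pt e) (G.pt (G.bar e)) :=
  Relation.ReflTransGen.single ⟨e, he, 1, (one_smul _ _).symm, (one_smul _ _).symm⟩

theorem smul (k : ℕ+) (h : G.Reach S p q) : G.Reach S (k • p) (k • q) :=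
  h.crossing_induction (refl _) fun e he m _ ih => by
    rw [← mul_smul] at ih ⊢
    exact ih.tail_smul he

theorem symm (hS : G.BarClosed S) (h : G.Reach S p q) : G.Reach S q p :=
  h.crossing_induction (refl _) fun e he k _ ih =>
    Relation.ReflTransGen.head ⟨G.bar e, hS e he, k, rfl, by rw [G.bar_bar]⟩ ih

/-- A path starting at `p` only crosses edges that `p` dominates. -/
theorem of_dominated (h : G.Reach S p q) (hT : ∀ e ∈ S, G.Dom S p (G.pt e) → e ∈ T) :
    G.Reach T p q :=
  h.crossing_induction (refl _) fun e he k hpe ih => ih.tail_smul (hT e he ⟨k, hpe⟩)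

/-- Consider the first crossing of an edge outside `T`. -/
theorem inter_or_exists_dom (T : Set E) (h : G.Reach S p q) :
    G.Reach (S ∩ T) p q ∨ ∃ g ∈ S, g ∉ T ∧ G.Dom (S ∩ T) p (G.pt g) := by
  induction h using crossing_induction with
  | refl => exact Or.inl (refl _)
  | cross e he k _ ih =>
    by_cases heT : e ∈ T
    · exact ih.imp_left (·.tail_smul ⟨he, heT⟩)
    · exact Or.inr (ih.elim (fun h => ⟨e, he, heT, k, h⟩) id)

theorem dom (h : G.Reach S p q) : G.Dom S p q := ⟨1, by rwa [one_smul]⟩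

end Reach

namespace Dom

theorem trans (h : G.Dom S p q) (h' : G.Dom S q r) : G.Dom S p r := by
  obtain ⟨k, hk⟩ := h
  obtain ⟨m, hm⟩ := h'
  exact ⟨k * m, by rw [mul_smul]; exact hk.trans (hm.smul k)⟩

instance : IsPreorder (Point V) (G.Dom S) where
  refl p := (Reach.refl p).dom
  trans _ _ _ := trans

theorem refl (p : Point V) : G.Dom S p p := (Reach.refl p).dom

theorem mono (hST : S ⊆ T) (h : G.Dom S p q) : G.Dom T p q := h.imp fun _ => Reach.mono hST

theorem smul (k : ℕ+) (p : Point V) : G.Dom S (k • p) p := ⟨k, Reach.refl _⟩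

theorem gen (p : Point V) : G.Dom S p (Point.gen p.vertex) :=
  ⟨p.exponent, by rw [p.exponent_smul_gen]; exact Reach.refl _⟩

end Dom

/-- Equal multiples are conjugated along a path, so a self-multiple is inherited upwards. -/
theorem SelfMultiple.of_dom (hS : G.BarClosed S) (h : G.SelfMultiple S p) (hqp : G.Dom S q p) :
    G.SelfMultiple S q := by
  obtain ⟨k, hk, h⟩ := h
  obtain ⟨m, hm⟩ := hqp
  refine ⟨k, hk, (hm.trans (h.smul m)).trans ?_⟩
  rw [smul_comm]
  exact (hm.symm hS).smul k

section Classes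

/-- The two points dominate each other. -/
abbrev SameClass (G : LGraph V E) (p q : Point V) : Prop := AntisymmRel (G.Dom Set.univ) p q

/-- The edges attached strictly below the class of `c`. -/
def below (G : LGraph V E) (c : Point V) : Set E :=
  {e | G.Dom Set.univ c (G.pt e) ∧ ¬ G.Dom Set.univ (G.pt e) c}

/-- The edges attached in the class of `c`. -/
def classEdges (G : LGraph V E) (c : Point V) : Set E := {e | G.SameClass c (G.pt e)}

/-- The vertices whose generator lies in the class of `c`. -/
def classVerts (G : LGraph V E) (c : Point V) : Set V := {v | G.SameClass c (Point.gen v)}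

/-- The edge `e` closes up to a strict monotone cycle: its terminal point reaches a proper multiple
of its initial point without crossing `e`. -/
def IsStrictMonotone (G : LGraph V E) (e : E) : Prop :=
  ∃ k : ℕ+, k ≠ 1 ∧ G.Reach (G.without e) (G.pt (G.bar e)) (k • G.pt e)

theorem sameClass_pt_bar (e : E) : G.SameClass (G.pt e) (G.pt (G.bar e)) :=
  ⟨(Reach.edge (Set.mem_univ e)).dom, ((Reach.edge (Set.mem_univ e)).symm .univ).dom⟩

theorem dom_congr_left (h : G.SameClass p q) : G.Dom Set.univ p r ↔ G.Dom Set.univ q r :=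
  ⟨h.2.trans, h.1.trans⟩

theorem dom_congr_right (h : G.SameClass p q) : G.Dom Set.univ r p ↔ G.Dom Set.univ r q :=
  ⟨(·.trans h.1), (·.trans h.2)⟩

theorem below_congr (h : G.SameClass c c') : G.below c = G.below c' := by
  simp only [below, dom_congr_left h, dom_congr_right h]

theorem classEdges_congr (h : G.SameClass c c') : G.classEdges c = G.classEdges c' := by
  simp only [classEdges, SameClass, AntisymmRel, dom_congr_left h, dom_congr_right h]

theorem classVerts_congr (h : G.SameClass c c') : G.classVerts c = G.classVerts c' := by
  simp only [classVerts, SameClass, AntisymmRel, dom_congr_left h, dom_congr_right h]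

theorem barClosed_below (c : Point V) : G.BarClosed (G.below c) := fun e he =>
  ⟨(dom_congr_right (sameClass_pt_bar e)).1 he.1,
    fun h => he.2 ((dom_congr_left (sameClass_pt_bar e)).2 h)⟩

theorem barClosed_classEdges (c : Point V) : G.BarClosed (G.classEdges c) := fun e he =>
  AntisymmRel.trans he (sameClass_pt_bar e)

theorem mem_below_or_mem_classEdges (h : G.Dom Set.univ c (G.pt e)) :
    e ∈ G.below c ∨ e ∈ G.classEdges c := by
  by_cases h' : G.Dom Set.univ (G.pt e) c
  · exact Or.inr ⟨h, h'⟩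
  · exact Or.inl ⟨h, h'⟩

theorem below_subset_compl_classEdges (c : Point V) : G.below c ⊆ (G.classEdges c)ᶜ :=
  fun _ he h => he.2 h.2

theorem below_subset_without (he : e ∈ G.classEdges c) : G.below c ⊆ G.without e := by
  refine fun f hf => ⟨?_, ?_⟩ <;> rintro rfl
  · exact below_subset_compl_classEdges c hf he
  · exact below_subset_compl_classEdges c hf (barClosed_classEdges c e he)

theorem o_notMem_classVerts (he : e ∈ G.below c) : G.o e ∉ G.classVerts c :=
  fun h => he.2 ((Dom.gen (G.pt e)).trans h.2)

theorem Reach.eq_of_vertex_mem_classVerts (h : G.Reach (G.below c) p q)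
    (hp : p.vertex ∈ G.classVerts c) : q = p := by
  induction h using Reach.crossing_induction with
  | refl => rfl
  | cross e he k _ ih =>
    refine absurd ?_ (o_notMem_classVerts he)
    rwa [← ih] at hp

theorem not_selfMultiple_of_vertex_mem_classVerts (hp : p.vertex ∈ G.classVerts c) :
    ¬ G.SelfMultiple (G.below c) p := fun ⟨_, hk, h⟩ =>
  hk (Point.smul_right_cancel ((h.eq_of_vertex_mem_classVerts hp).trans (one_smul _ p).symm))

theorem Reach.vertex_notMem_classVerts (h : G.Reach (G.below c) p q)
    (hp : p.vertex ∉ G.classVerts c) : q.vertex ∉ G.classVerts c := fun hq =>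
  hp ((h.symm (barClosed_below c)).eq_of_vertex_mem_classVerts hq ▸ hq)

theorem Reach.below (h : G.Reach Set.univ p q) (hcp : G.Dom Set.univ c p)
    (hpc : ¬ G.Dom Set.univ p c) : G.Reach (G.below c) p q :=
  h.of_dominated fun _ _ he => ⟨hcp.trans he, fun h => hpc (he.trans h)⟩

end Classes

section Walks

/-- A bar-closed edge set containing all edges outside the class of `c` which suffices for
reachability. -/
structure IsSpanning (G : LGraph V E) (c : Point V) (T : Set E) : Prop where
  barClosed : G.BarClosed T
  compl_subset : (G.classEdges c)ᶜ ⊆ T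
  reach : ∀ {p q : Point V}, G.Reach Set.univ p q → G.Reach T p q

/-- The end `b` in the class of `c` is reached from the end `a` by edges below `c`, up to the
factor `k`. -/
structure Descends (G : LGraph V E) (c : Point V) (T : Set E) (a b : E) (k : ℕ+) : Prop where
  mem_classEdges : b ∈ G.classEdges c
  mem : b ∈ T
  reach : G.Reach (G.below c) (G.pt a) (k • G.pt b)

/-- Alternating sequences of descents between ends and `n` crossings of edges of the class of `c`.
Each crossing starts over at the end itself instead of at the multiple of it that was reached; `k`
is the product of the discarded factors. -/
inductive ScaledWalk (G : LGraph V E) (c : Point V) (T : Set E) : ℕ → E → E → ℕ+ → Prop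
  | descend {a b : E} {k : ℕ+} : G.Descends c T a b k → ScaledWalk G c T 0 a b k
  | cross {n : ℕ} {a b d : E} {k m : ℕ+} : G.Descends c T a b k →
      ScaledWalk G c T n (G.bar b) d m → ScaledWalk G c T (n + 1) a d (k * m)

/-- Some scaled walk leads from the end `a` to the end `b`. -/
def Accessible (G : LGraph V E) (c : Point V) (T : Set E) (a b : E) : Prop :=
  ∃ n k, G.ScaledWalk c T n a b k

variable {n n' : ℕ} {a b d : E}

theorem IsSpanning.below_subset (hT : G.IsSpanning c T) : G.below c ⊆ T :=
  (below_subset_compl_classEdges c).trans hT.compl_subset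

theorem isSpanning_univ (c : Point V) : G.IsSpanning c Set.univ :=
  ⟨.univ, Set.subset_univ _, id⟩

namespace Descends

theorem refl (ha : a ∈ G.classEdges c) (haT : a ∈ T) : G.Descends c T a a 1 :=
  ⟨ha, haT, by rw [one_smul]; exact Reach.refl _⟩

theorem trans (h : G.Descends c T a b k) (h' : G.Descends c T b d m) :
    G.Descends c T a d (k * m) :=
  ⟨h'.1, h'.2, by rw [mul_smul]; exact h.reach.trans (h'.reach.smul k)⟩

end Descends

namespace ScaledWalk

theorem mem (h : G.ScaledWalk c T n a b k) : b ∈ G.classEdges c ∧ b ∈ T := by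
  induction h with
  | descend h => exact ⟨h.mem_classEdges, h.mem⟩
  | cross _ _ ih => exact ih

theorem prepend (h : G.Descends c T a b k) (h' : G.ScaledWalk c T n b d m) :
    G.ScaledWalk c T n a d (k * m) := by
  cases h' with
  | descend h' => exact .descend (h.trans h')
  | cross h₁ h₂ => rw [← mul_assoc]; exact .cross (h.trans h₁) h₂

theorem trans (h : G.ScaledWalk c T n a b k) (h' : G.ScaledWalk c T n' b d m) :
    G.ScaledWalk c T (n + n') a d (k * m) := by
  induction h with
  | descend h => rw [zero_add]; exact h'.prepend h
  | cross h₁ _ ih => rw [mul_assoc, Nat.add_right_comm]; exact .cross h₁ (ih h')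

theorem trans_bar (h : G.ScaledWalk c T n a b k) (h' : G.ScaledWalk c T n' (G.bar b) d m) :
    G.ScaledWalk c T (n + (n' + 1)) a d (k * m) := by
  have hcross := ScaledWalk.cross (.refl h.mem.1 h.mem.2) h'
  rw [one_mul] at hcross
  exact h.trans hcross

theorem split (hT : G.below c ⊆ T) (he : e ∈ G.classEdges c) (h : G.ScaledWalk c T n a d k) :
    G.Reach (T ∩ G.without e) (G.pt a) (k • G.pt d) ∨
      ∃ f n₁ n₂ k₁ k₂, (f = e ∨ f = G.bar e) ∧ G.ScaledWalk c T n₁ a f k₁ ∧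
        G.ScaledWalk c T n₂ (G.bar f) d k₂ ∧ n₁ + n₂ + 1 = n ∧ k = k₁ * k₂ := by
  have hsub : G.below c ⊆ T ∩ G.without e := Set.subset_inter hT (below_subset_without he)
  induction h with
  | descend h => exact Or.inl (h.reach.mono hsub)
  | @cross n a b d k m hab h ih =>
    by_cases hb : b ∈ G.without e
    · rcases ih with ih | ⟨f, n₁, n₂, k₁, k₂, hf, w₁, w₂, hn, hk⟩
      · have hcross := ((hab.reach.mono hsub).tail_smul ⟨hab.mem, hb⟩).trans (ih.smul k)
        exact Or.inl (by rwa [mul_smul])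
      · exact Or.inr ⟨f, n₁ + 1, n₂, k * k₁, k₂, hf, .cross hab w₁, w₂, by omega,
          by rw [hk, mul_assoc]⟩
    · exact Or.inr ⟨b, 0, n, k, m, eq_or_eq_bar_of_notMem_without hb, .descend hab, h,
        by omega, rfl⟩

/-- Cutting at the last crossing of `e`. -/
theorem exists_dom_without (hT : G.below c ⊆ T) (he : e ∈ G.classEdges c)
    (h : G.ScaledWalk c T n a d k) (ha : a = e ∨ a = G.bar e) :
    ∃ f, (f = e ∨ f = G.bar e) ∧ G.Dom (T ∩ G.without e) (G.pt f) (G.pt d) := by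
  induction n using Nat.strong_induction_on generalizing a k with
  | _ n ih =>
    rcases h.split hT he with h | ⟨f, n₁, n₂, k₁, k₂, hf, -, w₂, hn, -⟩
    · exact ⟨a, ha, k, h⟩
    · refine ih n₂ (by omega) w₂ ?_
      rcases hf with rfl | rfl
      · exact Or.inr rfl
      · exact Or.inl (G.bar_bar e)

end ScaledWalk

namespace Accessible

theorem refl (ha : a ∈ G.classEdges c) (haT : a ∈ T) : G.Accessible c T a a :=
  ⟨0, 1, .descend (.refl ha haT)⟩

theorem trans (h : G.Accessible c T a b) (h' : G.Accessible c T b d) : G.Accessible c T a d := by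
  obtain ⟨n, k, h⟩ := h
  obtain ⟨m, j, h'⟩ := h'
  exact ⟨_, _, h.trans h'⟩

theorem mem (h : G.Accessible c T a b) : b ∈ G.classEdges c ∧ b ∈ T :=
  let ⟨_, _, h⟩ := h
  h.mem

theorem bar (hT : G.BarClosed T) (h : G.Accessible c T a b) : G.Accessible c T a (G.bar b) := by
  obtain ⟨n, k, h⟩ := h
  exact ⟨_, _, h.trans_bar (.descend (.refl (barClosed_classEdges c b h.mem.1) (hT b h.mem.2)))⟩

end Accessible

theorem Descends.accessible (h : G.Descends c T a b k) : G.Accessible c T a b :=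
  ⟨0, k, .descend h⟩

/-- A shortest closed scaled walk with nontrivial factor crosses its first edge only once, hence
yields a strict monotone edge. -/
theorem ScaledWalk.exists_isStrictMonotone (hT : G.IsSpanning c T) (h : G.ScaledWalk c T n a a k)
    (hk : k ≠ 1) (hP : ∀ b, G.Accessible c T a b → ¬ G.SelfMultiple (G.below c) (G.pt b)) :
    ∃ e, G.IsStrictMonotone e := by
  induction n using Nat.strong_induction_on generalizing a k with
  | _ n ih =>
    have hacc : G.Accessible c T a a := ⟨n, k, h⟩
    cases h with
    | descend h => exact absurd ⟨k, hk, h.reach⟩ (hP a hacc)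
    | @cross n _ b _ k m hab hba =>
      have hb : G.Accessible c T a b := hab.accessible
      have hPb : ∀ d, G.Accessible c T b d → ¬ G.SelfMultiple (G.below c) (G.pt d) :=
        fun d hd => hP d (hb.trans hd)
      have hPbar : ∀ d, G.Accessible c T (G.bar b) d → ¬ G.SelfMultiple (G.below c) (G.pt d) :=
        fun d hd => hP d ((hb.bar hT.barClosed).trans hd)
      have hend : G.ScaledWalk c T 0 (G.bar b) (G.bar b) 1 := .descend
        (.refl (barClosed_classEdges c b hab.mem_classEdges) (hT.barClosed b hab.mem))
      have hw : G.ScaledWalk c T n (G.bar b) b (m * k) := hba.trans (.descend hab)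
      rw [mul_comm k m] at hk
      rcases hw.split hT.below_subset hab.mem_classEdges with
        h | ⟨f, n₁, n₂, k₁, k₂, hf, w₁, w₂, hn, hfactor⟩
      · exact ⟨b, _, hk, h.mono Set.inter_subset_right⟩
      have hor : k₁ ≠ 1 ∨ k₂ ≠ 1 := by
        by_contra! hone
        exact hk (by rw [hfactor, hone.1, hone.2, one_mul])
      rcases hf with rfl | rfl
      · rcases hor with h₁ | h₂
        · exact ih _ (by omega) (w₁.trans_bar hend) (by rwa [mul_one]) hPbar
        · exact ih _ (by omega) (w₂.trans_bar hend) (by rwa [mul_one]) hPbar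
      · rw [G.bar_bar] at w₂
        rcases hor with h₁ | h₂
        · exact ih _ (by omega) w₁ h₁ hPbar
        · exact ih _ (by omega) w₂ h₂ hPb

theorem exists_accessible_reach_below (hT : G.IsSpanning c T) (ha : a ∈ G.classEdges c)
    (haT : a ∈ T)
    (hone : ∀ f g k, G.Accessible c T a f → G.Descends c T f g k → k = 1)
    (h : G.Reach T (G.pt a) q) :
    ∃ f, G.Accessible c T a f ∧ G.Reach (G.below c) (G.pt f) q := by
  induction h using Reach.crossing_induction with
  | refl => exact ⟨a, .refl ha haT, .refl _⟩
  | cross g hg j h ih =>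
    obtain ⟨f, hf, hfg⟩ := ih
    have hcg : G.Dom Set.univ c (G.pt g) := ha.1.trans ⟨j, h.mono (Set.subset_univ T)⟩
    rcases mem_below_or_mem_classEdges hcg with hgb | hgc
    · exact ⟨f, hf, hfg.tail_smul hgb⟩
    · have hdesc : G.Descends c T f g j := ⟨hgc, hg, hfg⟩
      refine ⟨G.bar g, (hf.trans hdesc.accessible).bar hT.barClosed, ?_⟩
      rw [hone f g j hf hdesc, one_smul]
      exact .refl _

/-- If every end accessible from `a` gives access back to `a`, a nontrivial factor of a descent
closes up to a closed walk with nontrivial factor; without nontrivial factors, the self-multiple of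
`c` could not arise. -/
theorem exists_isStrictMonotone_of_sink (hT : G.IsSpanning c T)
    (hc : G.SelfMultiple Set.univ c) (ha : a ∈ G.classEdges c) (haT : a ∈ T)
    (hsink : ∀ b, G.Accessible c T a b → G.Accessible c T b a)
    (hP : ∀ b, G.Accessible c T a b → ¬ G.SelfMultiple (G.below c) (G.pt b)) :
    ∃ e, G.IsStrictMonotone e := by
  by_cases hone : ∀ f g k, G.Accessible c T a f → G.Descends c T f g k → k = 1
  · obtain ⟨k, hk, hR⟩ := hc.of_dom .univ ha.2
    obtain ⟨f, hf, hfa⟩ := exists_accessible_reach_below hT ha haT hone (hT.reach hR)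
    exact absurd (hone f a k hf ⟨ha, haT, hfa⟩) hk
  · push Not at hone
    obtain ⟨f, g, k, hf, hfg, hk⟩ := hone
    obtain ⟨n, m, hgf⟩ := (hsink g (hf.trans hfg.accessible)).trans hf
    refine (hgf.prepend hfg).exists_isStrictMonotone hT ?_ fun b hb => hP b (hf.trans hb)
    exact fun h => hk ((mul_eq_one_iff_of_one_le one_le one_le).1 h).1

theorem exists_sink [Finite E] (ha : a ∈ G.classEdges c) (haT : a ∈ T) :
    ∃ b, G.Accessible c T a b ∧ ∀ d, G.Accessible c T b d → G.Accessible c T d b := by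
  obtain ⟨b, hb, hmin⟩ := Set.exists_min_image {b | G.Accessible c T a b}
    (fun b => {d | G.Accessible c T b d}.ncard) (Set.toFinite _) ⟨a, .refl ha haT⟩
  refine ⟨b, hb, fun d hd => ?_⟩
  have hsub : {f | G.Accessible c T d f} ⊆ {f | G.Accessible c T b f} := fun f hf => hd.trans hf
  have heq := Set.eq_of_subset_of_ncard_le hsub (hmin d (hb.trans hd)) (Set.toFinite _)
  have hbb : b ∈ {f | G.Accessible c T b f} := .refl hb.mem.1 hb.mem.2
  rwa [← heq] at hbb

/-- `c` has a self-multiple, and its class is minimal with this property in a strong sense: no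
point of the class has a self-multiple by edges below the class. -/
structure TightClass (G : LGraph V E) (c : Point V) : Prop where
  selfMultiple : G.SelfMultiple Set.univ c
  not_selfMultiple : ∀ p, G.SameClass c p → ¬ G.SelfMultiple (G.below c) p

theorem TightClass.classEdges_nonempty (h : G.TightClass c) : (G.classEdges c).Nonempty := by
  by_contra! hempty
  refine h.not_selfMultiple c .rfl ?_
  obtain ⟨k, hk, hR⟩ := h.selfMultiple
  refine ⟨k, hk, hR.of_dominated fun e _ he => ?_⟩
  exact (mem_below_or_mem_classEdges he).resolve_right (hempty ▸ Set.notMem_empty e)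

theorem TightClass.exists_isStrictMonotone [Finite E] (h : G.TightClass c) :
    ∃ e, G.IsStrictMonotone e := by
  obtain ⟨a, ha⟩ := h.classEdges_nonempty
  obtain ⟨b, hab, hsink⟩ := exists_sink ha (Set.mem_univ a)
  exact exists_isStrictMonotone_of_sink (isSpanning_univ c) h.selfMultiple hab.mem.1 hab.mem.2
    hsink fun d hd => h.not_selfMultiple _ hd.mem.1

end Walks

section Rooted

/-- `c` has a self-multiple, and every point of the class of `c` at a vertex whose generator is
outside the class dominates the base point `z`, which is itself such a point, by edges below the
class. -/
structure RootedClass (G : LGraph V E) (c z : Point V) : Prop where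
  selfMultiple : G.SelfMultiple Set.univ c
  sameClass : G.SameClass c z
  vertex_notMem : z.vertex ∉ G.classVerts c
  dom_root : ∀ p, G.SameClass c p → p.vertex ∉ G.classVerts c → G.Dom (G.below c) p z

/-- More edges, counted without orientation, than vertices lie in the class of `c`. -/
def EdgeExcess (G : LGraph V E) (c : Point V) : Prop :=
  2 * (G.classVerts c).ncard < (G.classEdges c).ncard

/-- A rooted class in a graph without strict monotone edges, with a spanning set `T` in which no
edge of the class lies on a cycle through the root. -/
structure IsTreelike (G : LGraph V E) (c z : Point V) (T : Set E) : Prop where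
  rooted : G.RootedClass c z
  spanning : G.IsSpanning c T
  not_isStrictMonotone : ∀ e, ¬ G.IsStrictMonotone e
  not_cycle : ∀ a ∈ T, a ∈ G.classEdges c → G.Dom (T ∩ G.without a) (G.pt (G.bar a)) z →
    ¬ G.Dom (T ∩ G.without a) z (G.pt a)

/-- The terminus of the edge `b` of the class stays equivalent to the root when `b` is removed
from `T`, so that `b` is the end of its edge away from the root. -/
structure IsFarEnd (G : LGraph V E) (c z : Point V) (T : Set E) (b : E) : Prop where
  mem_classEdges : b ∈ G.classEdges c
  mem : b ∈ T
  antisymmRel : AntisymmRel (G.Dom (T ∩ G.without b)) (G.pt (G.bar b)) z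

/-- Points reached from the root by edges below the class, followed by crossings of edges of the
class away from the root. -/
inductive TreeReach (G : LGraph V E) (c z : Point V) (T : Set E) : Point V → Prop
  | descend {q : Point V} : G.Reach (G.below c) z q → TreeReach G c z T q
  | cross {b : E} {m : ℕ+} : G.IsFarEnd c z T b → TreeReach G c z T (m • G.pt (G.bar b)) →
      TreeReach G c z T (m • G.pt b)

variable {z : Point V} {a b b' g : E}

namespace IsTreelike

theorem below_subset (h : G.IsTreelike c z T) (ha : a ∈ G.classEdges c) :
    G.below c ⊆ T ∩ G.without a :=
  Set.subset_inter h.spanning.below_subset (below_subset_without ha)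

theorem exists_dom_root [Finite E] (h : G.IsTreelike c z T) (he : e ∈ G.classEdges c)
    (heT : e ∈ T) : ∃ f, (f = e ∨ f = G.bar e) ∧ G.Dom (T ∩ G.without e) (G.pt f) z := by
  obtain ⟨b, hb, hsink⟩ := exists_sink he heT
  obtain ⟨d, hd, hdv⟩ : ∃ d, G.Accessible c T b d ∧ (G.pt d).vertex ∉ G.classVerts c := by
    by_contra! hmem
    obtain ⟨f, hf⟩ := exists_isStrictMonotone_of_sink h.spanning h.rooted.selfMultiple hb.mem.1
      hb.mem.2 hsink fun d hd => not_selfMultiple_of_vertex_mem_classVerts (hmem d hd)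
    exact h.not_isStrictMonotone f hf
  obtain ⟨n, k, hw⟩ := hb.trans hd
  obtain ⟨f, hf, hfd⟩ := hw.exists_dom_without h.spanning.below_subset he (Or.inl rfl)
  exact ⟨f, hf, hfd.trans ((h.rooted.dom_root _ hd.mem.1 hdv).mono (h.below_subset he))⟩

theorem exists_root_dom (h : G.IsTreelike c z T) (he : e ∈ G.classEdges c) :
    ∃ f, (f = e ∨ f = G.bar e) ∧ G.Dom (T ∩ G.without e) z (G.pt f) := by
  obtain ⟨k, hk⟩ := h.rooted.sameClass.2.trans he.1
  rcases (h.spanning.reach hk).inter_or_exists_dom (G.without e) with h' | ⟨f, _, hf, h'⟩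
  · exact ⟨e, Or.inl rfl, k, h'⟩
  · exact ⟨f, eq_or_eq_bar_of_notMem_without hf, h'⟩

theorem not_cycle_bar (h : G.IsTreelike c z T) (he : e ∈ G.classEdges c) (heT : e ∈ T)
    (hez : G.Dom (T ∩ G.without e) (G.pt e) z) :
    ¬ G.Dom (T ∩ G.without e) z (G.pt (G.bar e)) := by
  have hbar := h.not_cycle (G.bar e) (h.spanning.barClosed e heT) (barClosed_classEdges c e he)
  rw [G.bar_bar, without_bar] at hbar
  exact hbar hez

theorem isFarEnd_or_isFarEnd_bar [Finite E] (h : G.IsTreelike c z T)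
    (he : e ∈ G.classEdges c) (heT : e ∈ T) :
    G.IsFarEnd c z T e ∨ G.IsFarEnd c z T (G.bar e) := by
  obtain ⟨f, hf, hfz⟩ := h.exists_dom_root he heT
  obtain ⟨g, hg, hzg⟩ := h.exists_root_dom he
  rcases hf with rfl | rfl <;> rcases hg with rfl | rfl
  · refine Or.inr ⟨barClosed_classEdges c g he, h.spanning.barClosed g heT, ?_⟩
    rw [G.bar_bar, without_bar]
    exact ⟨hfz, hzg⟩
  · exact absurd hzg (h.not_cycle_bar he heT hfz)
  · exact absurd hzg (h.not_cycle g heT he hfz)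
  · exact Or.inl ⟨he, heT, hfz, hzg⟩

theorem not_dom_root (h : G.IsTreelike c z T) (hb : G.IsFarEnd c z T b) :
    ¬ G.Dom (T ∩ G.without b) (G.pt b) z := fun hbz =>
  h.not_cycle_bar hb.mem_classEdges hb.mem hbz hb.antisymmRel.2

theorem not_root_dom (h : G.IsTreelike c z T) (hb : G.IsFarEnd c z T b) :
    ¬ G.Dom (T ∩ G.without b) z (G.pt b) :=
  h.not_cycle b hb.mem hb.mem_classEdges hb.antisymmRel.1

theorem o_mem_classVerts (h : G.IsTreelike c z T) (hb : G.IsFarEnd c z T b) :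
    G.o b ∈ G.classVerts c := by
  by_contra hv
  exact h.not_dom_root hb
    ((h.rooted.dom_root _ hb.mem_classEdges hv).mono (h.below_subset hb.mem_classEdges))

/-- From the common vertex of two far ends one cannot get to one of the two edges first: from there
one could go on to the root. -/
theorem not_dom_of_isFarEnd (h : G.IsTreelike c z T) (hb : G.IsFarEnd c z T b)
    (hb' : G.IsFarEnd c z T b') (ho : G.o b = G.o b') (hbb' : b ∈ G.without b')
    (hg : g ∉ G.without b) :
    ¬ G.Dom (T ∩ (G.without b ∩ G.without b')) (Point.gen (G.o b)) (G.pt g) := by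
  intro hdom
  have hsub : T ∩ (G.without b ∩ G.without b') ⊆ T ∩ G.without b := fun _ h => ⟨h.1, h.2.1⟩
  have hsub' : T ∩ (G.without b ∩ G.without b') ⊆ T ∩ G.without b' := fun _ h => ⟨h.1, h.2.2⟩
  have hgen : G.Dom (T ∩ G.without b) (G.pt b) (Point.gen (G.o b)) := .gen _
  have hgen' : ∀ S, G.Dom S (G.pt b') (Point.gen (G.o b)) := fun S => by rw [ho]; exact .gen _
  rcases eq_or_eq_bar_of_notMem_without hg with rfl | rfl
  · have hfar : G.Dom (T ∩ G.without b') (G.pt b') (G.pt (G.bar g)) :=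
      ((hgen' _).trans (hdom.mono hsub')).trans
        (Reach.edge (S := T ∩ G.without b') ⟨hb.mem, hbb'⟩).dom
    obtain ⟨k, hk⟩ := hb.antisymmRel.1
    have hcross := hk.inter_or_exists_dom (G.without b')
    rw [Set.inter_assoc] at hcross
    rcases hcross with hk | ⟨g', -, hg', hk⟩
    · exact h.not_dom_root hb' (hfar.trans ⟨k, hk.mono hsub'⟩)
    · rcases eq_or_eq_bar_of_notMem_without hg' with rfl | rfl
      · exact h.not_root_dom hb
          (((hb.antisymmRel.2.trans (hk.mono hsub)).trans (hgen' _)).trans (hdom.mono hsub))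
      · exact h.not_dom_root hb' ((hfar.trans (hk.mono hsub')).trans hb'.antisymmRel.1)
  · exact h.not_dom_root hb ((hgen.trans (hdom.mono hsub)).trans hb.antisymmRel.1)

theorem injOn_o (h : G.IsTreelike c z T) : Set.InjOn G.o {b | G.IsFarEnd c z T b} := by
  intro b hb b' hb' ho
  by_contra hne
  have hne_bar : b' ≠ G.bar b := by
    rintro rfl
    exact h.not_dom_root hb (by simpa only [G.bar_bar, without_bar] using hb'.antisymmRel.1)
  have hb'b : b' ∈ G.without b := ⟨Ne.symm hne, hne_bar⟩
  have hbb' : b ∈ G.without b' := ⟨hne, fun h => hne_bar (by rw [h, G.bar_bar])⟩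
  obtain ⟨k, hk⟩ := (h.o_mem_classVerts hb).2.trans h.rooted.sameClass.1
  rcases (h.spanning.reach hk).inter_or_exists_dom (G.without b ∩ G.without b') with
    hk | ⟨g, -, hg, hdom⟩
  · have hsub : T ∩ (G.without b ∩ G.without b') ⊆ T ∩ G.without b := fun _ h => ⟨h.1, h.2.1⟩
    exact h.not_dom_root hb ((Dom.gen _).trans ⟨k, hk.mono hsub⟩)
  · by_cases hgb : g ∈ G.without b
    · refine h.not_dom_of_isFarEnd hb' hb ho.symm hb'b (fun hgb' => hg ⟨hgb, hgb'⟩) ?_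
      rwa [← ho, Set.inter_comm (G.without b')]
    · exact h.not_dom_of_isFarEnd hb hb' ho hbb' hgb hdom

end IsTreelike

namespace TreeReach

theorem reach_below (hG : G.IsTreelike c z T) (h : G.TreeReach c z T q)
    (hq : q.vertex ∉ G.classVerts c) : G.Reach (G.below c) z q := by
  cases h with
  | descend h => exact h
  | cross hb _ => exact absurd (hG.o_mem_classVerts hb) hq

theorem exists_isFarEnd (hG : G.IsTreelike c z T) (h : G.TreeReach c z T q)
    (hq : q.vertex ∈ G.classVerts c) :
    ∃ b, ∃ m : ℕ+, G.IsFarEnd c z T b ∧ q = m • G.pt b ∧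
      G.TreeReach c z T (m • G.pt (G.bar b)) := by
  cases h with
  | descend h => exact absurd hq (h.vertex_notMem_classVerts hG.rooted.vertex_notMem)
  | @cross b m hb h => exact ⟨b, m, hb, rfl, h⟩

end TreeReach

theorem IsTreelike.treeReach [Finite E] (h : G.IsTreelike c z T) (hq : G.Reach T z q) :
    G.TreeReach c z T q := by
  induction hq using Reach.crossing_induction with
  | refl => exact .descend (.refl _)
  | cross g hg j hq ih =>
    have hcg : G.Dom Set.univ c (G.pt g) :=
      h.rooted.sameClass.1.trans ⟨j, hq.mono (Set.subset_univ T)⟩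
    rcases mem_below_or_mem_classEdges hcg with hgb | hgc
    · exact .descend ((ih.reach_below h (o_notMem_classVerts hgb)).tail_smul hgb)
    rcases h.isFarEnd_or_isFarEnd_bar hgc hg with hfar | hfar
    · obtain ⟨b, m, hb, heq, hback⟩ := ih.exists_isFarEnd h (h.o_mem_classVerts hfar)
      obtain rfl : g = b := h.injOn_o hfar hb (congrArg Point.vertex heq :)
      rwa [Point.smul_right_cancel heq]
    · exact .cross hfar (by rwa [G.bar_bar])

theorem IsTreelike.selfMultiple_below [Finite E] (h : G.IsTreelike c z T) :
    G.SelfMultiple (G.below c) z := by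
  obtain ⟨k, hk, hkz⟩ := h.rooted.selfMultiple.of_dom .univ h.rooted.sameClass.2
  exact ⟨k, hk, (h.treeReach (h.spanning.reach hkz)).reach_below h h.rooted.vertex_notMem⟩

theorem IsTreelike.ncard_classEdges_le [Finite V] [Finite E]
    (h : G.IsTreelike c z Set.univ) : (G.classEdges c).ncard ≤ 2 * (G.classVerts c).ncard := by
  set N : Set E := {b | G.IsFarEnd c z Set.univ b}
  have hcover : G.classEdges c ⊆ N ∪ G.bar '' N := fun e he =>
    (h.isFarEnd_or_isFarEnd_bar he trivial).imp id fun hb => ⟨G.bar e, hb, G.bar_bar e⟩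
  have hN : N.ncard ≤ (G.classVerts c).ncard :=
    Set.ncard_le_ncard_of_injOn G.o (fun b hb => h.o_mem_classVerts hb) h.injOn_o
  calc (G.classEdges c).ncard ≤ (N ∪ G.bar '' N).ncard := Set.ncard_le_ncard hcover
    _ ≤ N.ncard + (G.bar '' N).ncard := Set.ncard_union_le _ _
    _ ≤ N.ncard + N.ncard := Nat.add_le_add_left (Set.ncard_image_le) _
    _ ≤ 2 * (G.classVerts c).ncard := by omega

/-- Without strict monotone edges, a cycle through the root has factor one. -/
theorem reach_of_cycle (hno : ∀ e, ¬ G.IsStrictMonotone e)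
    (hz : G.Dom (T ∩ G.without a) (G.pt (G.bar a)) z)
    (ha : G.Dom (T ∩ G.without a) z (G.pt a)) :
    G.Reach (T ∩ G.without a) (G.pt (G.bar a)) z ∧ G.Reach (T ∩ G.without a) z (G.pt a) := by
  obtain ⟨k, hk⟩ := hz
  obtain ⟨m, hm⟩ := ha
  have hkm : k * m = 1 := by
    by_contra hne
    refine hno a ⟨k * m, hne, ?_⟩
    rw [mul_smul]
    exact (hk.trans (hm.smul k)).mono Set.inter_subset_right
  obtain ⟨rfl, rfl⟩ := (mul_eq_one_iff_of_one_le one_le one_le).1 hkm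
  rw [one_smul] at hk hm
  exact ⟨hk, hm⟩

theorem IsSpanning.inter_without (hT : G.IsSpanning c T) (ha : a ∈ G.classEdges c)
    (h : G.Reach (T ∩ G.without a) (G.pt (G.bar a)) (G.pt a)) :
    G.IsSpanning c (T ∩ G.without a) := by
  have hbar := hT.barClosed.inter (barClosed_without a)
  refine ⟨hbar, fun f hf => ⟨hT.compl_subset hf, ?_, ?_⟩, fun hpq => ?_⟩
  · rintro rfl
    exact hf ha
  · rintro rfl
    exact hf (barClosed_classEdges c a ha)
  · induction hT.reach hpq using Reach.crossing_induction with
    | refl => exact .refl _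
    | cross g hg j hpg ih =>
      specialize ih (hpg.mono (Set.subset_univ T))
      by_cases hga : g ∈ G.without a
      · exact ih.tail_smul ⟨hg, hga⟩
      · refine ih.trans (Reach.smul j ?_)
        rcases eq_or_eq_bar_of_notMem_without hga with rfl | rfl
        · exact h.symm hbar
        · rwa [G.bar_bar]

theorem RootedClass.isTreelike_univ (h : G.RootedClass c z)
    (hno : ∀ e, ¬ G.IsStrictMonotone e) (hz : G.SelfMultiple (G.below c) z) :
    G.IsTreelike c z Set.univ := by
  refine ⟨h, isSpanning_univ c, hno, fun a _ ha hz₁ hz₂ => ?_⟩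
  obtain ⟨hz₁, hz₂⟩ := reach_of_cycle hno hz₁ hz₂
  obtain ⟨k, hk, hkz⟩ := hz
  have hsub := Set.subset_inter (Set.subset_univ _) (below_subset_without ha)
  exact hno a ⟨k, hk, ((hz₁.trans (hkz.mono hsub)).trans (hz₂.smul k)).mono
    Set.inter_subset_right⟩

theorem RootedClass.exists_isTreelike [Finite E] (h : G.RootedClass c z)
    (hno : ∀ e, ¬ G.IsStrictMonotone e) : ∃ T, G.IsTreelike c z T := by
  obtain ⟨T, hT, hmin⟩ := Set.exists_min_image {T | G.IsSpanning c T} Set.ncard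
    (Set.toFinite _) ⟨Set.univ, isSpanning_univ c⟩
  refine ⟨T, h, hT, hno, fun a haT ha hz₁ hz₂ => ?_⟩
  obtain ⟨hz₁, hz₂⟩ := reach_of_cycle hno hz₁ hz₂
  refine absurd (hmin _ (hT.inter_without ha (hz₁.trans hz₂))) (not_le.2 ?_)
  exact Set.ncard_lt_ncard ⟨Set.inter_subset_left, fun hsub => (hsub haT).2.1 rfl⟩

theorem RootedClass.exists_isStrictMonotone [Finite V] [Finite E] (h : G.RootedClass c z)
    (hc : G.EdgeExcess c) : ∃ e, G.IsStrictMonotone e := by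
  by_contra! hno
  obtain ⟨T, hT⟩ := h.exists_isTreelike hno
  exact hc.not_ge (h.isTreelike_univ hno hT.selfMultiple_below).ncard_classEdges_le

end Rooted

section Transfer

/-- Mutually inverse maps of points, up to reachability. It plays the role of an isomorphism of
the groups of the two labeled graphs which takes elliptic elements to elliptic elements. -/
structure ReachEquiv (G : LGraph V E) (G' : LGraph V' E') where
  toFun : Point V →[ℕ+] Point V'
  invFun : Point V' →[ℕ+] Point V
  map_edge : ∀ e, G'.Reach Set.univ (toFun (G.pt e)) (toFun (G.pt (G.bar e)))
  inv_edge : ∀ e, G.Reach Set.univ (invFun (G'.pt e)) (invFun (G'.pt (G'.bar e)))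
  left_inv : ∀ v, G.Reach Set.univ (invFun (toFun (.gen v))) (.gen v)
  right_inv : ∀ v, G'.Reach Set.univ (toFun (invFun (.gen v))) (.gen v)

/-- The property of a graph which implies the existence of strict monotone edges and is preserved
by all elementary moves. -/
def Invariant (G : LGraph V E) : Prop :=
  (∃ c, G.TightClass c) ∨ ∃ c z, G.RootedClass c z ∧ G.EdgeExcess c

theorem Invariant.exists_isStrictMonotone [Finite V] [Finite E] (h : G.Invariant) :
    ∃ e, G.IsStrictMonotone e := by
  obtain ⟨_, h⟩ | ⟨_, _, h, hc⟩ := h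
  · exact h.exists_isStrictMonotone
  · exact h.exists_isStrictMonotone hc

theorem edgeExcess_congr (h : G.SameClass c c') : G.EdgeExcess c ↔ G.EdgeExcess c' := by
  rw [EdgeExcess, EdgeExcess, classVerts_congr h, classEdges_congr h]

namespace ReachEquiv

variable {G' : LGraph V' E'} (F : ReachEquiv G G')

/-- The inverse equivalence. -/
def symm : ReachEquiv G' G :=
  ⟨F.invFun, F.toFun, F.inv_edge, F.map_edge, F.right_inv, F.left_inv⟩

theorem reach_inv_map (p : Point V) : G.Reach Set.univ (F.invFun (F.toFun p)) p := by
  have h := (F.left_inv p.vertex).smul p.exponent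
  rwa [← map_smul, ← map_smul, p.exponent_smul_gen] at h

theorem sameClass_inv_map (p : Point V) : G.SameClass (F.invFun (F.toFun p)) p :=
  ⟨(F.reach_inv_map p).dom, ((F.reach_inv_map p).symm .univ).dom⟩

theorem map_reach (h : G.Reach Set.univ p q) : G'.Reach Set.univ (F.toFun p) (F.toFun q) := by
  induction h using Reach.crossing_induction with
  | refl => exact .refl _
  | cross e _ k _ ih =>
    rw [map_smul] at ih ⊢
    exact ih.trans ((F.map_edge e).smul k)

theorem map_dom (h : G.Dom Set.univ p q) : G'.Dom Set.univ (F.toFun p) (F.toFun q) :=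
  h.imp fun k hk => map_smul F.toFun k q ▸ F.map_reach hk

theorem dom_iff : G'.Dom Set.univ (F.toFun p) (F.toFun q) ↔ G.Dom Set.univ p q := by
  refine ⟨fun h => ?_, F.map_dom⟩
  rw [← dom_congr_left (F.sameClass_inv_map p), ← dom_congr_right (F.sameClass_inv_map q)]
  exact F.symm.map_dom h

theorem sameClass_iff : G'.SameClass (F.toFun p) (F.toFun q) ↔ G.SameClass p q :=
  and_congr F.dom_iff F.dom_iff

theorem map_reach_below (h : G.Reach (G.below c) p q) :
    G'.Reach (G'.below (F.toFun c)) (F.toFun p) (F.toFun q) := by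
  induction h using Reach.crossing_induction with
  | refl => exact .refl _
  | cross e he k _ ih =>
    rw [map_smul] at ih ⊢
    exact ih.trans (((F.map_edge e).below (F.map_dom he.1) (mt F.dom_iff.1 he.2)).smul k)

theorem map_selfMultiple (h : G.SelfMultiple Set.univ p) :
    G'.SelfMultiple Set.univ (F.toFun p) :=
  h.imp fun k hk => ⟨hk.1, map_smul F.toFun k p ▸ F.map_reach hk.2⟩

theorem vertex_mem_of_map (hcp : G.Dom Set.univ c p)
    (h : (F.toFun p).vertex ∈ G'.classVerts (F.toFun c)) : p.vertex ∈ G.classVerts c := by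
  refine ⟨hcp.trans (.gen p), F.dom_iff.1 ?_⟩
  have hgen := Dom.gen (G := G') (S := Set.univ) (F.toFun (.gen p.vertex))
  rw [← p.exponent_smul_gen, map_smul, Point.vertex_smul] at h
  exact hgen.trans h.2

theorem inv_vertex_notMem {p : Point V'} (hcp : G'.SameClass (F.toFun c) p)
    (hp : p.vertex ∉ G'.classVerts (F.toFun c)) :
    (F.invFun p).vertex ∉ G.classVerts c := by
  rw [← classVerts_congr (F.sameClass_inv_map c)]
  exact mt (F.symm.vertex_mem_of_map hcp.1) hp

theorem reach_below_map_inv {p : Point V'} (hcp : G'.SameClass (F.toFun c) p)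
    (hp : p.vertex ∉ G'.classVerts (F.toFun c)) :
    G'.Reach (G'.below (F.toFun c)) p (F.toFun (F.invFun p)) := by
  have h := (((F.right_inv p.vertex).symm .univ).below (hcp.1.trans (.gen p))
    fun h => hp ⟨hcp.1.trans (.gen p), h⟩).smul p.exponent
  rwa [← map_smul, ← map_smul, p.exponent_smul_gen] at h

theorem sameClass_inv {p : Point V'} (h : G'.SameClass (F.toFun c) p) :
    G.SameClass c (F.invFun p) :=
  (F.sameClass_inv_map c).symm.trans (F.symm.sameClass_iff.2 h)

theorem map_tightClass (h : G.TightClass c) : G'.TightClass (F.toFun c) := by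
  refine ⟨F.map_selfMultiple h.selfMultiple, fun p hp ⟨k, hk, hpk⟩ => ?_⟩
  refine h.not_selfMultiple _ (F.sameClass_inv hp) ⟨k, hk, ?_⟩
  have hinv := F.symm.map_reach_below hpk
  rw [map_smul] at hinv
  exact below_congr (F.sameClass_inv_map c) ▸ hinv

theorem map_rootedClass {z : Point V} (h : G.RootedClass c z) :
    G'.RootedClass (F.toFun c) (F.toFun z) where
  selfMultiple := F.map_selfMultiple h.selfMultiple
  sameClass := F.sameClass_iff.2 h.sameClass
  vertex_notMem := mt (F.vertex_mem_of_map h.sameClass.1) h.vertex_notMem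
  dom_root p hcp hp := by
    obtain ⟨k, hk⟩ := h.dom_root _ (F.sameClass_inv hcp) (F.inv_vertex_notMem hcp hp)
    refine ⟨k, (F.reach_below_map_inv hcp hp).trans ?_⟩
    rw [← map_smul]
    exact F.map_reach_below hk

theorem map_invariant (hF : ∀ c, G.EdgeExcess c → G'.EdgeExcess (F.toFun c))
    (h : G.Invariant) : G'.Invariant :=
  h.imp (fun ⟨_, hc⟩ => ⟨_, F.map_tightClass hc⟩)
    fun ⟨_, _, hc, hn⟩ => ⟨_, _, F.map_rootedClass hc, hF _ hn⟩

theorem invariant_iff (hF : ∀ c, G.EdgeExcess c ↔ G'.EdgeExcess (F.toFun c)) :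
    G.Invariant ↔ G'.Invariant :=
  ⟨F.map_invariant fun c => (hF c).1, F.symm.map_invariant fun c' hc' =>
    (hF _).2 ((edgeExcess_congr (F.symm.sameClass_inv_map c').symm).1 hc')⟩

theorem ncard_sameClass_eq {α α' : Type} {f : α → Point V} {f' : α' → Point V'} {s : Set α}
    {ι : α → α'} (hι : Set.BijOn ι s Set.univ)
    (h : ∀ a ∈ s, G'.SameClass (f' (ι a)) (F.toFun (f a))) (c : Point V) :
    {a' | G'.SameClass (F.toFun c) (f' a')}.ncard = ({a | G.SameClass c (f a)} ∩ s).ncard := by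
  have hmem : ∀ a ∈ s, G'.SameClass (F.toFun c) (f' (ι a)) ↔ G.SameClass c (f a) := fun a ha =>
    ⟨fun hc => F.sameClass_iff.1 (hc.trans (h a ha)),
      fun hc => (F.sameClass_iff.2 hc).trans (h a ha).symm⟩
  have himage : ι '' ({a | G.SameClass c (f a)} ∩ s) =
      {a' | G'.SameClass (F.toFun c) (f' a')} := by
    ext a'
    constructor
    · rintro ⟨a, ⟨hc, ha⟩, rfl⟩
      exact (hmem a ha).2 hc
    · intro hc
      obtain ⟨a, ha, rfl⟩ := hι.surjOn (Set.mem_univ a')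
      exact ⟨a, ⟨(hmem a ha).1 hc, ha⟩, rfl⟩
  rw [← himage, (hι.injOn.mono Set.inter_subset_right).ncard_image]

end ReachEquiv

end Transfer

section Moves

/-- The equivariant map of points which takes the generator at `v` to the `μ v`-th multiple of the
generator at `φ v`. -/
def Point.map (φ : V → V') (μ : V → ℕ+) : Point V →[ℕ+] Point V' where
  toFun p := ⟨φ p.vertex, μ p.vertex * p.exponent⟩
  map_smul' k p := Point.ext rfl (mul_left_comm (μ p.vertex) k p.exponent)

/-- No label vanishes. -/
def NonzeroLabels (G : LGraph V E) : Prop := ∀ e, G.lab e ≠ 0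

/-- The property carried along a sequence of moves. Labels are only required to be nonzero, since
an inverse A-move may introduce a negative label. -/
structure IsPersistent (G : LGraph V E) : Prop where
  finite_verts : Finite V
  finite_edges : Finite E
  nonzeroLabels : G.NonzeroLabels
  invariant : G.Invariant

theorem isPersistent_congr {G' : LGraph V' E'} (hV : Finite V ↔ Finite V')
    (hE : Finite E ↔ Finite E') (hlab : G.NonzeroLabels ↔ G'.NonzeroLabels)
    (hinv : Finite V → Finite E → G.NonzeroLabels → (G.Invariant ↔ G'.Invariant)) :
    G.IsPersistent ↔ G'.IsPersistent :=
  ⟨fun ⟨h₁, h₂, h₃, h⟩ => ⟨hV.1 h₁, hE.1 h₂, hlab.1 h₃, (hinv h₁ h₂ h₃).1 h⟩,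
    fun ⟨h₁, h₂, h₃, h⟩ =>
      ⟨hV.2 h₁, hE.2 h₂, hlab.2 h₃, (hinv (hV.2 h₁) (hE.2 h₂) (hlab.2 h₃)).2 h⟩⟩

theorem ReachEquiv.invariant_iff_of_bijOn {G' : LGraph V' E'} (F : ReachEquiv G G') {φ : V → V'}
    {Φ : E → E'} {w : Set V} {s : Set E} (hφ : Set.BijOn φ w Set.univ)
    (hΦ : Set.BijOn Φ s Set.univ)
    (hw : ∀ v ∈ w, G'.SameClass (.gen (φ v)) (F.toFun (.gen v)))
    (hs : ∀ e ∈ s, G'.SameClass (G'.pt (Φ e)) (F.toFun (G.pt e)))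
    (hcount : ∀ c, (G.classEdges c).ncard + 2 * (G.classVerts c ∩ w).ncard =
      (G.classEdges c ∩ s).ncard + 2 * (G.classVerts c).ncard) :
    G.Invariant ↔ G'.Invariant := by
  refine F.invariant_iff fun c => ?_
  have hverts : (G'.classVerts (F.toFun c)).ncard = (G.classVerts c ∩ w).ncard :=
    F.ncard_sameClass_eq hφ hw c
  have hedges : (G'.classEdges (F.toFun c)).ncard = (G.classEdges c ∩ s).ncard :=
    F.ncard_sameClass_eq hΦ hs c
  have := hcount c
  rw [EdgeExcess, EdgeExcess]
  omega

section Rescaling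

theorem sameClass_smul_of_reach (h : G.Reach Set.univ p ((k * m) • p)) :
    G.SameClass (k • p) p :=
  ⟨.smul k p, m, by rwa [← mul_smul, mul_comm]⟩

/-- Rescaling every vertex group, by factors which are invertible in both graphs up to
reachability. -/
theorem invariant_iff_of_rescaling {G' : LGraph V E} (μ ν : V → ℕ+)
    (hG : ∀ p : Point V, G.Reach Set.univ p ((μ p.vertex * ν p.vertex) • p))
    (hG' : ∀ p : Point V, G'.Reach Set.univ p ((μ p.vertex * ν p.vertex) • p))
    (hmap : ∀ e, G'.Reach Set.univ (μ (G.o e) • G.pt e) (μ (G.t e) • G.pt (G.bar e)))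
    (hinv : ∀ e, G.Reach Set.univ (ν (G'.o e) • G'.pt e) (ν (G'.t e) • G'.pt (G'.bar e)))
    (hclass : ∀ e, G'.SameClass (G'.pt e) (G.pt e)) :
    G.Invariant ↔ G'.Invariant := by
  have hμ (p : Point V) : G'.SameClass p (Point.map id μ p) :=
    (sameClass_smul_of_reach (hG' p)).symm
  let F : ReachEquiv G G' :=
    { toFun := Point.map id μ
      invFun := Point.map id ν
      map_edge := hmap
      inv_edge := hinv
      left_inv v := by
        have h := (hG (.gen v)).symm .univ
        rwa [mul_comm, mul_smul] at h
      right_inv v := by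
        have h := (hG' (.gen v)).symm .univ
        rwa [mul_smul] at h }
  exact F.invariant_iff_of_bijOn (Set.bijOn_id _) (Set.bijOn_id _) (fun v _ => hμ (.gen v))
    (fun e _ => (hclass e).trans (hμ _)) fun c => by rw [Set.inter_univ, Set.inter_univ]

end Rescaling

section Slide

theorem pt_slide_of_ne (h : f ≠ e) (d : E) : (G.slide e d).pt f = G.pt f :=
  Point.ext (if_neg h) (congrArg posNatAbs (if_neg h))

theorem lab_slide_self {z : ℤ} (hf : G.lab f ≠ 0) (hz : G.lab e = G.lab f * z) :
    (G.slide e f).lab e = z * G.lab (G.bar f) := by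
  refine (if_pos rfl).trans ?_
  rw [hz, mul_assoc, Int.mul_ediv_cancel_left _ hf]

theorem nonzeroLabels_slide_iff (h : G.CanSlide e f) :
    (G.slide e f).NonzeroLabels ↔ G.NonzeroLabels := by
  have hne : ∀ x ≠ e, (G.slide e f).lab x = G.lab x := fun x hx => if_neg hx
  obtain ⟨hfe, hfbar, -, z, hz⟩ := h
  have hbar : G.bar f ≠ e := fun h => hfbar (by rw [← h, G.bar_bar])
  have hiff (hf : G.lab f ≠ 0) (hf' : G.lab (G.bar f) ≠ 0) :
      (G.slide e f).lab e ≠ 0 ↔ G.lab e ≠ 0 := by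
    rw [lab_slide_self hf hz, hz, mul_ne_zero_iff, mul_ne_zero_iff]
    tauto
  constructor <;> intro h x <;> rcases eq_or_ne x e with rfl | hx
  · exact (hiff (hne _ hfe ▸ h f) (hne _ hbar ▸ h _)).1 (h x)
  · exact hne x hx ▸ h x
  · exact (hiff (h f) (h _)).2 (h x)
  · exact hne x hx ▸ h x

theorem exists_pt_slide (h : G.CanSlide e f) (hlab : G.NonzeroLabels) :
    ∃ k : ℕ+, G.pt e = k • G.pt f ∧ (G.slide e f).pt e = k • G.pt (G.bar f) := by
  obtain ⟨-, -, ho, z, hz⟩ := h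
  have hz0 : z ≠ 0 := fun h => hlab e (by rw [hz, h, mul_zero])
  refine ⟨posNatAbs z, Point.ext ho.symm ?_, Point.ext (if_pos rfl) ?_⟩
  · exact (congrArg posNatAbs (hz.trans (mul_comm _ _))).trans (posNatAbs_mul hz0 (hlab f))
  · exact (congrArg posNatAbs (lab_slide_self (hlab f) hz)).trans (posNatAbs_mul hz0 (hlab _))

theorem invariant_slide_iff (h : G.CanSlide e f) (hlab : G.NonzeroLabels) :
    (G.slide e f).Invariant ↔ G.Invariant := by
  obtain ⟨k, hk, hk'⟩ := exists_pt_slide h hlab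
  obtain ⟨hfe, hfbar, -⟩ := h
  have hbar : G.bar f ≠ e := fun h => hfbar (by rw [← h, G.bar_bar])
  set G' := G.slide e f
  have hreach : ∀ x, G.Reach Set.univ (G.pt x) (G'.pt x) := fun x => by
    rcases eq_or_ne x e with rfl | hx
    · rw [hk, hk']
      exact (Reach.edge (Set.mem_univ f)).smul k
    · exact pt_slide_of_ne hx f ▸ .refl _
  have hreach' : ∀ x, G'.Reach Set.univ (G.pt x) (G'.pt x) := fun x => by
    rcases eq_or_ne x e with rfl | hx
    · rw [hk, hk', ← pt_slide_of_ne hfe f, ← pt_slide_of_ne hbar f]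
      exact (Reach.edge (Set.mem_univ f)).smul k
    · exact pt_slide_of_ne hx f ▸ .refl _
  refine (invariant_iff_of_rescaling 1 1 (fun p => ?_) (fun p => ?_) (fun x => ?_) (fun x => ?_)
    fun x => ⟨((hreach' x).symm .univ).dom, (hreach' x).dom⟩).symm <;>
    simp only [Pi.one_apply, mul_one, one_smul]
  · exact .refl _
  · exact .refl _
  · exact ((hreach' x).trans (.edge (Set.mem_univ x))).trans ((hreach' (G.bar x)).symm .univ)
  · exact (((hreach x).symm .univ).trans (.edge (Set.mem_univ x))).trans (hreach (G.bar x))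

theorem isPersistent_slide_iff (h : G.CanSlide e f) :
    G.IsPersistent ↔ (G.slide e f).IsPersistent :=
  isPersistent_congr .rfl .rfl (nonzeroLabels_slide_iff h).symm
    fun _ _ hlab => (invariant_slide_iff h hlab).symm

end Slide

section Induction

theorem reach_smul_of_loop (hloop : G.o e = G.t e) (he : G.lab e = 1) (hp : p.vertex = G.o e) :
    G.Reach Set.univ p (G.absLab (G.bar e) • p) := by
  have hpt : G.pt e = .gen p.vertex := Point.ext hp.symm (congrArg posNatAbs he)
  have hpt' : G.pt (G.bar e) = G.absLab (G.bar e) • .gen p.vertex :=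
    Point.ext (hloop.symm.trans hp.symm) (mul_one _).symm
  have h := (Reach.edge (G := G) (Set.mem_univ e)).smul p.exponent
  rwa [hpt, hpt', smul_comm, p.exponent_smul_gen] at h

variable {l : ℤ}

theorem lab_inductionMove_of_notMem_without (h : f ∉ G.without e) :
    (G.inductionMove e l).lab f = G.lab f :=
  if_neg fun h' => h ⟨h'.1, h'.2.1⟩

theorem pt_inductionMove_of_notMem_without (h : f ∉ G.without e) :
    (G.inductionMove e l).pt f = G.pt f :=
  Point.ext rfl (congrArg posNatAbs (lab_inductionMove_of_notMem_without h))

theorem notMem_without_self (e : E) : e ∉ G.without e := fun h => h.1 rfl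

theorem bar_notMem_without (e : E) : G.bar e ∉ G.without e := fun h => h.2 rfl

theorem nonzeroLabels_inductionMove_iff (hdvd : l ∣ G.lab (G.bar e)) :
    (G.inductionMove e l).NonzeroLabels ↔ G.NonzeroLabels := by
  have hlab (f : E) : (G.inductionMove e l).lab f = G.lab f ∨
      (G.inductionMove e l).lab f = l * G.lab f := by
    classical exact (ite_eq_or_eq _ _ _).symm
  constructor <;> intro h f
  · obtain hf | hf := hlab f
    · exact hf ▸ h f
    · exact right_ne_zero_of_mul (hf ▸ h f)
  · obtain hf | hf := hlab f
    · exact hf ▸ h f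
    · exact hf ▸ mul_ne_zero (ne_zero_of_dvd_ne_zero (h _) hdvd) (h f)

open Classical in
theorem pt_inductionMove (hl : l ≠ 0) (hlab : G.NonzeroLabels) (h : f ∈ G.without e) :
    (G.inductionMove e l).pt f =
      (Pi.mulSingle (G.o e) (posNatAbs l) : V → ℕ+) (G.o f) • G.pt f := by
  refine Point.ext rfl ?_
  rcases eq_or_ne (G.o f) (G.o e) with ho | ho
  · rw [ho, Pi.mulSingle_eq_same]
    have hf : (G.inductionMove e l).lab f = l * G.lab f := if_pos ⟨h.1, h.2, ho⟩
    exact (congrArg posNatAbs hf :).trans (posNatAbs_mul hl (hlab f))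
  · rw [Pi.mulSingle_eq_of_ne ho, one_smul]
    exact congrArg posNatAbs (if_neg fun h' => ho h'.2.2)

theorem reach_mulSingle_smul [DecidableEq V] (hloop : G.o e = G.t e) (he : G.lab e = 1)
    (hkm : G.absLab (G.bar e) = k * m) (p : Point V) :
    G.Reach Set.univ p (((Pi.mulSingle (G.o e) k : V → ℕ+) p.vertex *
      (Pi.mulSingle (G.o e) m : V → ℕ+) p.vertex) • p) := by
  rcases eq_or_ne p.vertex (G.o e) with hp | hp
  · rw [hp, Pi.mulSingle_eq_same, Pi.mulSingle_eq_same, ← hkm]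
    exact reach_smul_of_loop hloop he hp
  · rw [Pi.mulSingle_eq_of_ne hp, Pi.mulSingle_eq_of_ne hp, one_mul, one_smul]
    exact .refl p

theorem o_eq_t_of_notMem_without (hloop : G.o e = G.t e) (hf : f ∉ G.without e) :
    G.o f = G.t f := by
  rcases eq_or_eq_bar_of_notMem_without hf with rfl | rfl
  · exact hloop
  · exact hloop.symm.trans (congrArg G.o (G.bar_bar e)).symm

open Classical in
theorem reach_smul_pt_inductionMove {ν : V → ℕ+} (hloop : G.o e = G.t e) (hl : l ≠ 0)
    (hlab : G.NonzeroLabels)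
    (hν : ∀ p : Point V, G.Reach Set.univ p
      (((Pi.mulSingle (G.o e) (posNatAbs l) : V → ℕ+) p.vertex * ν p.vertex) • p)) (f : E) :
    G.Reach Set.univ (ν (G.o f) • (G.inductionMove e l).pt f)
      (ν (G.t f) • (G.inductionMove e l).pt (G.bar f)) := by
  have hbar : G.bar f ∈ G.without e ↔ f ∈ G.without e := (barClosed_without e).bar_mem_iff
  by_cases hf : f ∈ G.without e
  · have h := (((hν (G.pt f)).symm .univ).trans (.edge (Set.mem_univ f))).trans
      (hν (G.pt (G.bar f)))
    rw [mul_comm, mul_smul, mul_comm, mul_smul] at h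
    rw [pt_inductionMove hl hlab hf, pt_inductionMove hl hlab (hbar.2 hf)]
    exact h
  · rw [pt_inductionMove_of_notMem_without hf,
      pt_inductionMove_of_notMem_without (mt hbar.1 hf), ← o_eq_t_of_notMem_without hloop hf]
    exact (Reach.edge (Set.mem_univ f)).smul _

theorem invariant_inductionMove_iff (hloop : G.o e = G.t e) (he : G.lab e = 1)
    (hdvd : l ∣ G.lab (G.bar e)) (hlab : G.NonzeroLabels) :
    G.Invariant ↔ (G.inductionMove e l).Invariant := by
  classical
  obtain ⟨n, hn⟩ := hdvd
  have hl : l ≠ 0 := fun h => hlab (G.bar e) (by rw [hn, h, zero_mul])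
  have hn0 : n ≠ 0 := fun h => hlab (G.bar e) (by rw [hn, h, mul_zero])
  have hln : G.absLab (G.bar e) = posNatAbs l * posNatAbs n :=
    (congrArg posNatAbs hn).trans (posNatAbs_mul hl hn0)
  set G' := G.inductionMove e l
  have hreach := reach_mulSingle_smul hloop he hln
  have hreach' := reach_mulSingle_smul (G := G') hloop
    ((lab_inductionMove_of_notMem_without (notMem_without_self e)).trans he)
    ((congrArg posNatAbs (lab_inductionMove_of_notMem_without (bar_notMem_without e))).trans hln)
  refine invariant_iff_of_rescaling _ _ hreach hreach' (fun f => ?_)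
    (reach_smul_pt_inductionMove hloop hl hlab hreach) fun f => ?_ <;>
    by_cases hf : f ∈ G.without e
  · rw [← pt_inductionMove hl hlab hf]
    have h := pt_inductionMove hl hlab (barClosed_without e f hf)
    exact h ▸ Reach.edge (Set.mem_univ f)
  · rw [← o_eq_t_of_notMem_without hloop hf, ← pt_inductionMove_of_notMem_without (l := l) hf,
      ← pt_inductionMove_of_notMem_without (l := l) (mt (barClosed_without e).bar_mem_iff.1 hf)]
    exact (Reach.edge (Set.mem_univ f)).smul _
  · rw [pt_inductionMove hl hlab hf]
    exact sameClass_smul_of_reach (hreach' (G.pt f))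
  · exact .of_eq (pt_inductionMove_of_notMem_without hf)

theorem isPersistent_inductionMove_iff (hloop : G.o e = G.t e) (he : G.lab e = 1)
    (hdvd : l ∣ G.lab (G.bar e)) :
    G.IsPersistent ↔ (G.inductionMove e l).IsPersistent :=
  isPersistent_congr .rfl .rfl (nonzeroLabels_inductionMove_iff hdvd).symm
    fun _ _ => invariant_inductionMove_iff hloop he hdvd

end Induction

section Contraction

/-- `F` identifies the points of `G` with those of `G'` so that the edges outside `s` become
trivial, while the vertices in `w` and the edges in `s` are in bijection, by `φ` and `Φ`, with those
of `G'`. Both isomorphisms and collapses are of this kind. -/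
structure IsContraction (G : LGraph V E) (G' : LGraph V' E') (F : Point V →[ℕ+] Point V')
    (φ : V → V') (Φ : E → E') (w : Set V) (s : Set E) : Prop where
  bijOn_verts : Set.BijOn φ w Set.univ
  bijOn_edges : Set.BijOn Φ s Set.univ
  barClosed : G.BarClosed s
  map_gen : ∀ v ∈ w, F (.gen v) = .gen (φ v)
  pt_map : ∀ e ∈ s, G'.pt (Φ e) = F (G.pt e)
  bar_map : ∀ e ∈ s, G'.bar (Φ e) = Φ (G.bar e)
  map_pt_bar : ∀ e ∉ s, F (G.pt (G.bar e)) = F (G.pt e)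
  exists_lift : ∀ v, ∃ q : Point V, q.vertex ∈ w ∧ F q = F (.gen v) ∧
    G.Reach Set.univ q (.gen v)

namespace IsContraction

variable {G' : LGraph V' E'} {F : Point V →[ℕ+] Point V'} {φ : V → V'} {Φ : E → E'} {w : Set V}
  {s : Set E}

theorem exists_reachEquiv (h : IsContraction G G' F φ Φ w s) :
    ∃ R : ReachEquiv G G', R.toFun = F := by
  choose σ hσw hφσ using fun v' => h.bijOn_verts.surjOn (Set.mem_univ v')
  let H : Point V' →[ℕ+] Point V := Point.map σ 1
  have hH (v' : V') : H (.gen v') = .gen (σ v') := Point.ext rfl (one_mul 1)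
  have hgen (v : V) (hv : v ∈ w) : H (F (.gen v)) = .gen v := by
    rw [h.map_gen v hv, hH, h.bijOn_verts.injOn (hσw _) hv (hφσ _)]
  have hlift (v : V) : G.Reach Set.univ (H (F (.gen v))) (.gen v) := by
    obtain ⟨q, hqw, hFq, hq⟩ := h.exists_lift v
    rwa [← hFq, ← q.exponent_smul_gen, map_smul, map_smul, hgen _ hqw, q.exponent_smul_gen]
  have hHF (p : Point V) : G.Reach Set.univ (H (F p)) p := by
    have hp := (hlift p.vertex).smul p.exponent
    rwa [← map_smul, ← map_smul, p.exponent_smul_gen] at hp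
  refine ⟨⟨F, H, fun e => ?_, fun e' => ?_, hlift, fun v' => ?_⟩, rfl⟩
  · by_cases he : e ∈ s
    · rw [← h.pt_map e he, ← h.pt_map _ (h.barClosed e he), ← h.bar_map e he]
      exact .edge (Set.mem_univ _)
    · exact h.map_pt_bar e he ▸ .refl _
  · obtain ⟨e, he, rfl⟩ := h.bijOn_edges.surjOn (Set.mem_univ e')
    rw [h.bar_map e he, h.pt_map e he, h.pt_map _ (h.barClosed e he)]
    exact ((hHF _).trans (.edge (Set.mem_univ e))).trans ((hHF _).symm .univ)
  · rw [hH, h.map_gen _ (hσw v'), hφσ]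
    exact .refl _

theorem invariant_iff (h : IsContraction G G' F φ Φ w s)
    (hcount : ∀ c, (G.classEdges c).ncard + 2 * (G.classVerts c ∩ w).ncard =
      (G.classEdges c ∩ s).ncard + 2 * (G.classVerts c).ncard) :
    G.Invariant ↔ G'.Invariant := by
  obtain ⟨R, rfl⟩ := h.exists_reachEquiv
  exact R.invariant_iff_of_bijOn h.bijOn_verts h.bijOn_edges
    (fun v hv => .of_eq (h.map_gen v hv).symm) (fun e he => .of_eq (h.pt_map e he)) hcount

end IsContraction

theorem Isom.isPersistent_iff {G' : LGraph V' E'} (h : Isom G G') :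
    G.IsPersistent ↔ G'.IsPersistent := by
  obtain ⟨φ, Φ, hφ, hΦ, ho, hbar, hlab⟩ := h
  refine isPersistent_congr (Equiv.ofBijective φ hφ).finite_iff
    (Equiv.ofBijective Φ hΦ).finite_iff ?_ fun _ _ _ => ?_
  · simp only [NonzeroLabels, hΦ.surjective.forall, hlab]
  · have hcontr : IsContraction G G' (Point.map φ 1) φ Φ Set.univ Set.univ :=
      { bijOn_verts := Set.bijOn_univ.2 hφ
        bijOn_edges := Set.bijOn_univ.2 hΦ
        barClosed := .univ
        map_gen v _ := Point.ext rfl (one_mul 1)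
        pt_map e _ := Point.ext (ho e) ((congrArg posNatAbs (hlab e)).trans (one_mul _).symm)
        bar_map e _ := hbar e
        map_pt_bar e he := absurd (Set.mem_univ e) he
        exists_lift v := ⟨.gen v, Set.mem_univ v, rfl, .refl _⟩ }
    exact hcontr.invariant_iff fun c => by rw [Set.inter_univ, Set.inter_univ]

end Contraction

section AMove

open Classical in
/-- The graph with `λ(d)` replaced by `1`. An A-move is an inverse induction move leading to this
graph, followed by the collapse of `d`. -/
noncomputable def unitLab (G : LGraph V E) (d : E) : LGraph V E :=
  { G with lab := Function.update G.lab d 1 }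

open Classical in
/-- The map of edges which extends `Φ` by taking `e` to `e'` and `ē` to `ē'`. -/
noncomputable def extendEdge (G : LGraph V E) (G' : LGraph V' E') (e : E) (e' : E') (Φ : E → E')
    (x : E) : E' :=
  if x = e then e' else if x = G.bar e then G'.bar e' else Φ x

open Classical in
theorem lab_unitLab_self (d : E) : (G.unitLab d).lab d = 1 :=
  Function.update_self (β := fun _ => ℤ) d 1 G.lab

open Classical in
theorem lab_unitLab_of_ne {d : E} (h : e ≠ d) : (G.unitLab d).lab e = G.lab e :=
  Function.update_of_ne h _ _

theorem pt_unitLab_self (d : E) : (G.unitLab d).pt d = .gen (G.o d) :=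
  Point.ext rfl (congrArg posNatAbs (lab_unitLab_self d))

theorem pt_unitLab_of_ne {d : E} (h : e ≠ d) : (G.unitLab d).pt e = G.pt e :=
  Point.ext rfl (congrArg posNatAbs (lab_unitLab_of_ne h))

section ExtendEdge

variable {G' : LGraph V' E'} {e' : E'} {Φ : E → E'}

theorem extendEdge_self (e : E) : G.extendEdge G' e e' Φ e = e' := if_pos rfl

theorem extendEdge_bar (e : E) : G.extendEdge G' e e' Φ (G.bar e) = G'.bar e' :=
  (if_neg (G.bar_ne e)).trans (if_pos rfl)

theorem extendEdge_of_mem (h : f ∈ G.without e) : G.extendEdge G' e e' Φ f = Φ f :=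
  (if_neg h.1).trans (if_neg h.2)

theorem eq_or_eq_bar_or_mem_inter (e : E) (hf : f ∈ S) :
    f = e ∨ f = G.bar e ∨ f ∈ G.without e ∩ S := by
  by_cases hfe : f ∈ G.without e
  · exact Or.inr (Or.inr ⟨hfe, hf⟩)
  · exact (eq_or_eq_bar_of_notMem_without hfe).imp_right Or.inl

theorem bijOn_extendEdge (he : e ∈ S) (hS : G.BarClosed S)
    (hΦ : Set.BijOn Φ (G.without e ∩ S) (G'.without e')) :
    Set.BijOn (G.extendEdge G' e e' Φ) S Set.univ := by
  refine ⟨fun _ _ => Set.mem_univ _, fun x hx y hy hxy => ?_, fun y _ => ?_⟩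
  · have hmaps (z) (hz : z ∈ G.without e ∩ S) : Φ z ≠ e' ∧ Φ z ≠ G'.bar e' := hΦ.mapsTo hz
    have hbar := G'.bar_ne e'
    have hx := eq_or_eq_bar_or_mem_inter (G := G) e hx
    have hy := eq_or_eq_bar_or_mem_inter (G := G) e hy
    grind [extendEdge_self, extendEdge_bar, extendEdge_of_mem, Set.InjOn, hΦ.injOn]
  · by_cases hy : y ∈ G'.without e'
    · obtain ⟨x, hx, rfl⟩ := hΦ.surjOn hy
      exact ⟨x, hx.2, extendEdge_of_mem hx.1⟩
    · obtain rfl | rfl := eq_or_eq_bar_of_notMem_without hy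
      · exact ⟨e, he, extendEdge_self e⟩
      · exact ⟨G.bar e, hS e he, extendEdge_bar e⟩

end ExtendEdge

open Classical in
/-- The map of points induced by the collapse of `d`, for a map `φ` of the vertices other than
`o(d)`: the generator at `o(d)` is identified with its `λ(d̄)`-th multiple at `t(d)`. -/
noncomputable def collapse (G : LGraph V E) (d : E) (φ : V → V') : Point V →[ℕ+] Point V' :=
  Point.map (Function.update φ (G.o d) (φ (G.t d))) (Pi.mulSingle (G.o d) (G.absLab (G.bar d)))

open Classical in
theorem collapse_of_vertex_ne {d : E} {φ : V → V'} (hp : p.vertex ≠ G.o d) :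
    G.collapse d φ p = ⟨φ p.vertex, p.exponent⟩ := by
  refine Point.ext (Function.update_of_ne hp _ _) ?_
  change (Pi.mulSingle (G.o d) (G.absLab (G.bar d)) : V → ℕ+) p.vertex * p.exponent = p.exponent
  rw [Pi.mulSingle_eq_of_ne hp, one_mul]

open Classical in
theorem collapse_of_vertex_eq {d : E} {φ : V → V'} (hp : p.vertex = G.o d) :
    G.collapse d φ p = ⟨φ (G.t d), G.absLab (G.bar d) * p.exponent⟩ := by
  obtain ⟨v, k⟩ := p
  obtain rfl : v = G.o d := hp
  refine Point.ext (Function.update_self (β := fun _ => V') _ _ φ) ?_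
  change (Pi.mulSingle (G.o d) (G.absLab (G.bar d)) : V → ℕ+) (G.o d) * k = _
  rw [Pi.mulSingle_eq_same]

/-- The witnesses of an A-move: the loop `e` and the edge `d` are deleted, the loop `e'` is added,
and `φ` and `Φ` identify the remaining vertices and edges. -/
structure IsAMoveVia (G : LGraph V E) (G' : LGraph V' E') (e d : E) (e' : E') (φ : V → V')
    (Φ : E → E') : Prop where
  loop : G.o e = G.t e
  lab_loop : G.lab e = 1
  o_eq : G.o d = G.o e
  t_ne : G.t d ≠ G.o e
  lab_ne_one : G.lab d ≠ 1
  lab_dvd : G.lab d ∣ G.lab (G.bar e)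
  o_ne : ∀ x ∈ G.without e ∩ G.without d, G.o x ≠ G.o e
  o_new : G'.o e' = φ (G.t d)
  t_new : G'.t e' = φ (G.t d)
  lab_new : G'.lab e' = G.lab (G.bar d)
  lab_bar_new : G'.lab (G'.bar e') = G.lab (G.bar d) * G.lab (G.bar e)
  bijOn_verts : Set.BijOn φ {G.o e}ᶜ Set.univ
  bijOn_edges : Set.BijOn Φ (G.without e ∩ G.without d) (G'.without e')
  o_map : ∀ x ∈ G.without e ∩ G.without d, G'.o (Φ x) = φ (G.o x)
  bar_map : ∀ x ∈ G.without e ∩ G.without d, G'.bar (Φ x) = Φ (G.bar x)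
  lab_map : ∀ x ∈ G.without e ∩ G.without d, G'.lab (Φ x) = G.lab x

theorem IsAMove.exists_via {G' : LGraph V' E'} (h : IsAMove G G') :
    ∃ e d e' φ Φ, IsAMoveVia G G' e d e' φ Φ := by
  obtain ⟨e, d, e', φ, Φ, hloop, he, -, hod, htd, hd, -, hdvd, hinc, ho, ht, hlab, hlab', hφ, hφ',
    hΦ, hΦinj, hΦsurj⟩ := h
  have hrest (x) (hx : x ∈ G.without e ∩ G.without d) := hΦ x hx.1.1 hx.1.2 hx.2.1 hx.2.2
  refine ⟨e, d, e', φ, Φ, hloop, he, hod, htd, hd, hdvd, fun x hx hox => ?_, ho, ht, hlab, hlab',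
    ⟨fun _ _ => Set.mem_univ _, fun v hv w hw => hφ v w hv hw, fun v' _ => hφ' v'⟩,
    ⟨fun x hx => ⟨(hrest x hx).1, (hrest x hx).2.1⟩, fun x hx y hy => ?_, fun y hy => ?_⟩,
    fun x hx => (hrest x hx).2.2.1, fun x hx => (hrest x hx).2.2.2.1,
    fun x hx => (hrest x hx).2.2.2.2⟩
  · obtain h | h | h := hinc x hox
    exacts [hx.1.1 h, hx.1.2 h, hx.2.1 h]
  · exact hΦinj x y hx.1.1 hx.1.2 hx.2.1 hx.2.2 hy.1.1 hy.1.2 hy.2.1 hy.2.2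
  · obtain ⟨x, h₁, h₂, h₃, h₄, rfl⟩ := hΦsurj y hy.1 hy.2
    exact ⟨x, ⟨⟨h₁, h₂⟩, h₃, h₄⟩, rfl⟩

namespace IsAMoveVia

variable {G' : LGraph V' E'} {d : E} {e' : E'} {φ : V → V'} {Φ : E → E'}

theorem mem_without (h : IsAMoveVia G G' e d e' φ Φ) : e ∈ G.without d :=
  ⟨fun hed => h.lab_ne_one (hed ▸ h.lab_loop), fun hed => h.t_ne (congrArg G.o hed).symm⟩

theorem mem_without' (h : IsAMoveVia G G' e d e' φ Φ) : d ∈ G.without e := by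
  refine ⟨fun hde => h.mem_without.1 hde.symm, fun hde => h.mem_without.2 ?_⟩
  rw [hde, G.bar_bar]

theorem o_bar_eq (h : IsAMoveVia G G' e d e' φ Φ) : G.o (G.bar e) = G.o e := h.loop.symm

theorem inductionMove_unitLab (h : IsAMoveVia G G' e d e' φ Φ) :
    (G.unitLab d).inductionMove e (G.lab d) = G := by
  suffices hlab : ((G.unitLab d).inductionMove e (G.lab d)).lab = G.lab from
    congrArg (fun lab => { G with lab := lab }) hlab
  funext x
  rcases eq_or_ne x d with rfl | hx
  · refine (if_pos ⟨h.mem_without'.1, h.mem_without'.2, h.o_eq⟩).trans ?_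
    rw [lab_unitLab_self, mul_one]
  · refine (if_neg fun hx' => ?_).trans (lab_unitLab_of_ne hx)
    refine h.o_ne x ⟨⟨hx'.1, hx'.2.1⟩, hx, ?_⟩ hx'.2.2
    rintro rfl
    exact h.t_ne hx'.2.2

theorem isPersistent_unitLab_iff (h : IsAMoveVia G G' e d e' φ Φ) :
    (G.unitLab d).IsPersistent ↔ G.IsPersistent := by
  have hbar := (barClosed_without d e h.mem_without).1
  have hiff := isPersistent_inductionMove_iff (G := G.unitLab d) (l := G.lab d) h.loop
    ((lab_unitLab_of_ne h.mem_without.1).trans h.lab_loop)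
    ((lab_unitLab_of_ne hbar).symm ▸ h.lab_dvd)
  rwa [h.inductionMove_unitLab] at hiff

theorem nonzeroLabels_unitLab_iff (h : IsAMoveVia G G' e d e' φ Φ) :
    (G.unitLab d).NonzeroLabels ↔ G'.NonzeroLabels := by
  have hne {x : E} (hx : x ∈ G.without d) := lab_unitLab_of_ne (G := G) hx.1
  have hbar := lab_unitLab_of_ne (G := G) (G.bar_ne d)
  have he := h.mem_without
  have hebar := barClosed_without d e he
  have hmap {x : E} (hx : x ∈ G.without e ∩ G.without d) := (hne hx.2).trans (h.lab_map x hx).symm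
  constructor
  · intro hG y
    by_cases hy : y ∈ G'.without e'
    · obtain ⟨x, hx, rfl⟩ := h.bijOn_edges.surjOn hy
      exact hmap hx ▸ hG x
    · obtain rfl | rfl := eq_or_eq_bar_of_notMem_without hy
      · exact h.lab_new ▸ hbar ▸ hG (G.bar d)
      · exact h.lab_bar_new ▸ mul_ne_zero (hbar ▸ hG (G.bar d)) (hne hebar ▸ hG (G.bar e))
  · intro hG' x
    obtain rfl | rfl | hx := eq_or_eq_bar_or_mem_inter (G := G) d (Set.mem_univ x)
    · exact lab_unitLab_self x ▸ one_ne_zero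
    · exact hbar ▸ h.lab_new ▸ hG' e'
    obtain rfl | rfl | hx := eq_or_eq_bar_or_mem_inter (G := G) e hx.1
    · exact hne he ▸ h.lab_loop ▸ one_ne_zero
    · exact hne hebar ▸ right_ne_zero_of_mul (h.lab_bar_new ▸ hG' (G'.bar e'))
    · exact hmap hx ▸ hG' (Φ x)

theorem pt_map (h : IsAMoveVia G G' e d e' φ Φ) (hlab : G.lab (G.bar d) ≠ 0)
    (hlab' : G.lab (G.bar e) ≠ 0) (hf : f ∈ G.without d) :
    G'.pt (G.extendEdge G' e e' Φ f) = G.collapse d φ (G.pt f) := by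
  have ho := h.o_eq
  obtain rfl | rfl | hf := eq_or_eq_bar_or_mem_inter (G := G) e hf
  · rw [extendEdge_self, collapse_of_vertex_eq ho.symm]
    have hf : G.absLab f = 1 := congrArg posNatAbs h.lab_loop
    exact Point.ext h.o_new ((congrArg posNatAbs h.lab_new).trans
      ((congrArg (_ * ·) hf).trans (mul_one _)).symm)
  · rw [extendEdge_bar, collapse_of_vertex_eq (h.o_bar_eq.trans ho.symm)]
    exact Point.ext h.t_new ((congrArg posNatAbs h.lab_bar_new).trans (posNatAbs_mul hlab hlab'))
  · rw [extendEdge_of_mem hf.1, collapse_of_vertex_ne (ho ▸ h.o_ne f hf)]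
    exact Point.ext (h.o_map f hf) (congrArg posNatAbs (h.lab_map f hf))

theorem bar_extendEdge (h : IsAMoveVia G G' e d e' φ Φ) (hf : f ∈ G.without d) :
    G'.bar (G.extendEdge G' e e' Φ f) = G.extendEdge G' e e' Φ (G.bar f) := by
  have hbar := G.bar_bar e
  obtain rfl | rfl | hf := eq_or_eq_bar_or_mem_inter (G := G) e hf
  · rw [extendEdge_self, extendEdge_bar]
  · rw [hbar, extendEdge_self, extendEdge_bar, G'.bar_bar]
  · rw [extendEdge_of_mem hf.1, extendEdge_of_mem (barClosed_without e f hf.1)]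
    exact h.bar_map f hf

theorem collapse_pt_bar (h : IsAMoveVia G G' e d e' φ Φ) :
    G.collapse d φ ((G.unitLab d).pt (G.bar d)) = G.collapse d φ ((G.unitLab d).pt d) := by
  rw [pt_unitLab_self, pt_unitLab_of_ne (G.bar_ne d), collapse_of_vertex_eq (p := .gen _) rfl,
    collapse_of_vertex_ne (h.o_eq ▸ h.t_ne)]
  exact Point.ext rfl (mul_one _).symm

theorem isContraction_unitLab (h : IsAMoveVia G G' e d e' φ Φ) (hlab : G.lab (G.bar d) ≠ 0)
    (hlab' : G.lab (G.bar e) ≠ 0) :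
    IsContraction (G.unitLab d) G' (G.collapse d φ) φ (G.extendEdge G' e e' Φ) {G.o e}ᶜ
      (G.without d) where
  bijOn_verts := h.bijOn_verts
  bijOn_edges := bijOn_extendEdge h.mem_without (barClosed_without d) h.bijOn_edges
  barClosed := barClosed_without d
  map_gen v hv := collapse_of_vertex_ne (h.o_eq ▸ hv)
  pt_map x hx := (h.pt_map hlab hlab' hx).trans (congrArg _ (pt_unitLab_of_ne hx.1).symm)
  bar_map x hx := h.bar_extendEdge hx
  map_pt_bar x hx := by
    have hd := h.collapse_pt_bar
    have hbar := G.bar_bar d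
    obtain rfl | rfl := eq_or_eq_bar_of_notMem_without hx
    · exact hd
    · exact (congrArg _ (congrArg _ hbar)).trans hd.symm
  exists_lift v := by
    rcases eq_or_ne v (G.o e) with rfl | hv
    · refine ⟨(G.unitLab d).pt (G.bar d), h.t_ne, ?_, ?_⟩
      · rw [← h.o_eq, ← pt_unitLab_self]
        exact h.collapse_pt_bar
      · rw [← h.o_eq, ← pt_unitLab_self]
        exact (Reach.edge (Set.mem_univ d)).symm .univ
    · exact ⟨.gen v, hv, rfl, .refl _⟩

end IsAMoveVia

theorem finite_iff_of_bijOn {α β : Type} {F : α → β} {s : Set α} (h : Set.BijOn F s Set.univ)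
    (hs : sᶜ.Finite) : Finite α ↔ Finite β := by
  rw [← Set.finite_univ_iff (α := β), ← h.finite_iff_finite, ← Set.finite_univ_iff,
    ← Set.union_compl_self s, Set.finite_union]
  exact and_iff_left hs

theorem finite_compl_without (e : E) : (G.without e)ᶜ.Finite :=
  (Set.toFinite {e, G.bar e}).subset fun _ h => eq_or_eq_bar_of_notMem_without h

theorem ncard_inter_without_add_two [Finite E] (hS : G.BarClosed S) (he : e ∈ S) :
    (S ∩ G.without e).ncard + 2 = S.ncard := by
  have hdiff : S ∩ G.without e = S \ {e, G.bar e} := by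
    ext f
    simp only [without, Set.mem_inter_iff, Set.mem_ofPred_eq, Set.mem_sdiff, Set.mem_insert_iff,
      Set.mem_singleton_iff, not_or]
  have hsub : {e, G.bar e} ⊆ S := Set.insert_subset he (Set.singleton_subset_iff.2 (hS e he))
  rw [hdiff, ← Set.ncard_pair (G.bar_ne e).symm, Set.ncard_sdiff_add_ncard_of_subset hsub]

theorem ncard_classEdges_add_eq [Finite V] [Finite E] {d : E} (hd : G.pt d = .gen (G.o d))
    (c : Point V) :
    (G.classEdges c).ncard + 2 * (G.classVerts c ∩ {G.o d}ᶜ).ncard =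
      (G.classEdges c ∩ G.without d).ncard + 2 * (G.classVerts c).ncard := by
  have hiff : d ∈ G.classEdges c ↔ G.o d ∈ G.classVerts c := by
    rw [classEdges, Set.mem_ofPred_eq, hd, classVerts, Set.mem_ofPred_eq]
  rw [← Set.sdiff_eq]
  by_cases hdc : d ∈ G.classEdges c
  · have hedges := ncard_inter_without_add_two (barClosed_classEdges c) hdc
    have hverts := Set.ncard_sdiff_singleton_add_one (hiff.1 hdc)
    omega
  · rw [Set.sdiff_singleton_eq_self (mt hiff.2 hdc), Set.inter_eq_left.2]
    rintro f hf
    refine ⟨?_, ?_⟩ <;> rintro rfl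
    · exact hdc hf
    · exact hdc ((barClosed_classEdges c).bar_mem_iff.1 hf)

theorem IsAMove.isPersistent_iff {G' : LGraph V' E'} (h : IsAMove G G') :
    G.IsPersistent ↔ G'.IsPersistent := by
  obtain ⟨e, d, e', φ, Φ, h⟩ := h.exists_via
  refine h.isPersistent_unitLab_iff.symm.trans <| isPersistent_congr
    (finite_iff_of_bijOn h.bijOn_verts (by rw [compl_compl]; exact Set.finite_singleton _))
    (finite_iff_of_bijOn (bijOn_extendEdge h.mem_without (barClosed_without d) h.bijOn_edges)
      (finite_compl_without d)) h.nonzeroLabels_unitLab_iff fun _ _ hlab => ?_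
  have hcontr := h.isContraction_unitLab
    (lab_unitLab_of_ne (G.bar_ne d) ▸ hlab (G.bar d))
    (lab_unitLab_of_ne (barClosed_without d e h.mem_without).1 ▸ hlab (G.bar e))
  exact hcontr.invariant_iff (h.o_eq ▸ ncard_classEdges_add_eq (pt_unitLab_self d))

end AMove

theorem IsSlideMove.isPersistent_iff {G' : LGraph V' E'} (h : IsSlideMove G G') :
    G.IsPersistent ↔ G'.IsPersistent := by
  obtain ⟨e, f, hef, hiso⟩ := h
  exact (isPersistent_slide_iff hef).trans hiso.isPersistent_iff.symm

theorem IsInductionMove.isPersistent_iff {G' : LGraph V' E'} (h : IsInductionMove G G') :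
    G.IsPersistent ↔ G'.IsPersistent := by
  obtain ⟨e, l, hloop, he, -, hdvd, hiso⟩ := h
  exact (isPersistent_inductionMove_iff hloop he hdvd).trans hiso.isPersistent_iff.symm

theorem isPersistent_iff_of_elemMove {X Y : BGraph} (h : X.ElemMove Y) :
    X.G.IsPersistent ↔ Y.G.IsPersistent := by
  obtain h | h | h | h | h := h
  exacts [h.isPersistent_iff, h.isPersistent_iff, h.isPersistent_iff.symm, h.isPersistent_iff,
    h.isPersistent_iff.symm]

end Moves

section Paths

/-- The edge path `l` leads from `p` to `r`, crossing its edges one after the other. -/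
inductive Traverses (G : LGraph V E) : Point V → List E → Point V → Prop
  | nil (p : Point V) : Traverses G p [] p
  | cons {e : E} {l : List E} {r : Point V} (k : ℕ+) :
      Traverses G (k • G.pt (G.bar e)) l r → Traverses G (k • G.pt e) (e :: l) r

variable {l : List E}

theorem cast_absLab (h : G.lab e ≠ 0) : ((G.absLab e : ℕ) : ℚ) = |(G.lab e : ℚ)| := by
  exact_mod_cast congrArg (Int.cast (R := ℚ)) (coe_posNatAbs h)

theorem q_cons (e : E) (l : List E) : G.q (e :: l) = G.qe e * G.q l := by
  rw [q, q, List.map_cons, List.prod_cons]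

theorem exponent_mul_abs_q_cons (hG : G.NonzeroLabels) (k : ℕ+) (e : E) (l : List E) :
    ((k • G.pt e).exponent : ℚ) * |G.q (e :: l)| = (k • G.pt (G.bar e)).exponent * |G.q l| := by
  have he : |(G.lab e : ℚ)| ≠ 0 := abs_ne_zero.2 (Int.cast_ne_zero.2 (hG e))
  rw [q_cons, qe, abs_mul, abs_div, Point.exponent_smul, Point.exponent_smul, PNat.mul_coe,
    PNat.mul_coe, Nat.cast_mul, Nat.cast_mul, pt, pt, cast_absLab (hG e), cast_absLab (hG _)]
  field_simp

theorem absLab_mul_abs_q_append_singleton (hG : G.NonzeroLabels) (l : List E) (e : E) :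
    (G.absLab e : ℚ) * |G.q (l ++ [e])| = G.absLab (G.bar e) * |G.q l| := by
  have he : |(G.lab e : ℚ)| ≠ 0 := abs_ne_zero.2 (Int.cast_ne_zero.2 (hG e))
  rw [q, List.map_append, List.prod_append, List.map_singleton, List.prod_singleton, qe, abs_mul,
    abs_div, cast_absLab (hG e), cast_absLab (hG _), q]
  field_simp

theorem exists_int_eq_mul_iff {x y : ℚ} : (∃ k : ℤ, x = k * y) ↔ ∃ k : ℕ, |x| = k * |y| := by
  constructor
  · rintro ⟨k, rfl⟩
    exact ⟨k.natAbs, by rw [abs_mul, Nat.cast_natAbs, Int.cast_abs]⟩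
  · rintro ⟨k, hk⟩
    rw [← Nat.abs_cast, ← abs_mul, abs_eq_abs] at hk
    obtain hk | hk := hk
    · exact ⟨k, by exact_mod_cast hk⟩
    · exact ⟨-k, by push_cast; rw [hk, neg_mul]⟩

theorem traverses_cons_iff :
    G.Traverses p (e :: l) r ↔ ∃ k : ℕ+, p = k • G.pt e ∧ G.Traverses (k • G.pt (G.bar e)) l r := by
  constructor
  · rintro ⟨⟩
    exact ⟨_, rfl, ‹_›⟩
  · rintro ⟨k, rfl, h⟩
    exact .cons k h

theorem reach_iff_exists_traverses :
    G.Reach S p r ↔ ∃ l : List E, (∀ a ∈ l, a ∈ S) ∧ G.Traverses p l r := by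
  constructor
  · intro h
    induction h using Relation.ReflTransGen.head_induction_on with
    | refl => exact ⟨[], fun _ h => absurd h List.not_mem_nil, .nil r⟩
    | head hs _ ih =>
      obtain ⟨e, he, k, rfl, rfl⟩ := hs
      obtain ⟨l, hl, h⟩ := ih
      exact ⟨e :: l, List.forall_mem_cons.2 ⟨he, hl⟩, .cons k h⟩
  · rintro ⟨l, hl, h⟩
    induction h with
    | nil p => exact .refl p
    | cons k _ ih =>
      obtain ⟨he, hl⟩ := List.forall_mem_cons.1 hl
      exact ((Reach.edge he).smul k).trans (ih hl)

namespace Traverses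

theorem t_getLastD (h : G.Traverses p l r) (he : G.t e = p.vertex) :
    G.t (l.getLastD e) = r.vertex := by
  induction h generalizing e with
  | nil p => exact he
  | cons k _ ih =>
    rw [List.getLastD_cons]
    exact ih rfl

theorem exponent_mul_abs_q (h : G.Traverses p l r) (hG : G.NonzeroLabels) :
    (p.exponent : ℚ) * |G.q l| = r.exponent := by
  induction h with
  | nil p => simp [q]
  | cons k _ ih =>
    rw [← ih]
    exact exponent_mul_abs_q_cons hG k _ _

end Traverses

theorem exists_eq_smul_pt (ho : G.o e = p.vertex)
    (h : ∃ k : ℕ, (p.exponent : ℚ) = k * G.absLab e) : ∃ k : ℕ+, p = k • G.pt e := by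
  obtain ⟨k, hk⟩ := h
  replace hk : (p.exponent : ℕ) = k * G.absLab e := by exact_mod_cast hk
  have hk0 : 0 < k := Nat.pos_of_mul_pos_right (hk ▸ p.exponent.pos)
  exact ⟨⟨k, hk0⟩, Point.ext ho.symm (PNat.eq hk)⟩

theorem exists_traverses_iff (hG : G.NonzeroLabels) :
    (∃ r, G.Traverses p l r) ↔ G.IsEdgePath l ∧ (∀ a ∈ l.head?, G.o a = p.vertex) ∧
      ∀ i : Fin l.length, ∃ k : ℕ,
        (p.exponent : ℚ) * |G.q (l.take i)| = k * G.absLab (l.get i) := by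
  induction l generalizing p with
  | nil => exact iff_of_true ⟨p, .nil p⟩ ⟨List.isChain_nil, nofun, nofun⟩
  | cons e l ih =>
    have hhead {v : V} : (∀ a ∈ (e :: l).head?, G.o a = v) ↔ G.o e = v := by
      simp only [List.head?_cons, Option.mem_def, Option.some.injEq, forall_eq']
    have hnil : |G.q []| = 1 := abs_one
    constructor
    · rintro ⟨r, h⟩
      obtain ⟨k, rfl, hl⟩ := traverses_cons_iff.1 h
      obtain ⟨hpath, ho, hdiv⟩ := ih.1 ⟨r, hl⟩
      refine ⟨List.isChain_cons.2 ⟨fun a ha => (ho a ha).symm, hpath⟩, hhead.2 rfl,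
        Fin.cases ⟨k, ?_⟩ fun i => ?_⟩
      · rw [Fin.val_zero, List.take_zero, hnil, mul_one, Point.exponent_smul, PNat.mul_coe]
        exact Nat.cast_mul _ _
      · obtain ⟨m, hm⟩ := hdiv i
        exact ⟨m, (exponent_mul_abs_q_cons hG k e _).trans hm⟩
    · rintro ⟨hpath, ho, hdiv⟩
      obtain ⟨hpath, htail⟩ := List.isChain_cons.1 hpath
      obtain ⟨k, rfl⟩ := exists_eq_smul_pt (hhead.1 ho) <| (hdiv 0).imp fun k hk => by
        rwa [Fin.val_zero, List.take_zero, hnil, mul_one] at hk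
      obtain ⟨r, h⟩ := ih.2 ⟨htail, fun a ha => (hpath a ha).symm, fun i =>
        (hdiv i.succ).imp fun m hm => (exponent_mul_abs_q_cons hG k e _).symm.trans hm⟩
      exact ⟨r, .cons k h⟩

theorem isEEdgePath_iff (hG : G.NonzeroLabels) :
    G.IsEEdgePath e l ↔ (∀ a ∈ l, a ∈ G.without e) ∧ ∃ r, G.Traverses (G.pt e) l r := by
  have hdiv (i : Fin l.length) :
      (∃ k : ℤ, (G.lab e : ℚ) * G.q (l.take i) = k * G.lab (l.get i)) ↔
        ∃ k : ℕ, (G.absLab e : ℚ) * |G.q (l.take i)| = k * G.absLab (l.get i) := by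
    rw [exists_int_eq_mul_iff, abs_mul, cast_absLab (hG e), cast_absLab (hG _)]
  rw [exists_traverses_iff hG, IsEEdgePath, and_left_comm]
  exact and_congr_right' (and_congr_right' (and_congr_right' (forall_congr' hdiv)))

theorem Traverses.abs_q (h : G.Traverses p l (k • p)) (hG : G.NonzeroLabels) : |G.q l| = k := by
  have hp : (p.exponent : ℚ) ≠ 0 := Nat.cast_ne_zero.2 p.exponent.ne_zero
  refine mul_left_cancel₀ hp ((h.exponent_mul_abs_q hG).trans ?_)
  rw [Point.exponent_smul, PNat.mul_coe, Nat.cast_mul, mul_comm]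

theorem Traverses.abs_q_append_singleton (h : G.Traverses (G.pt (G.bar e)) l (k • G.pt e))
    (hG : G.NonzeroLabels) : |G.q (l ++ [e])| = k := by
  have he : (G.absLab e : ℚ) ≠ 0 := Nat.cast_ne_zero.2 (G.absLab e).ne_zero
  refine mul_left_cancel₀ he ((absLab_mul_abs_q_append_singleton hG l e).trans ?_)
  refine (h.exponent_mul_abs_q hG).trans ?_
  rw [Point.exponent_smul, PNat.mul_coe, Nat.cast_mul, mul_comm, pt]

theorem exists_int_eq_iff {x : ℚ} : (∃ k : ℤ, x = k) ↔ ∃ k : ℕ, |x| = k := by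
  simpa only [mul_one, abs_one] using exists_int_eq_mul_iff (x := x) (y := 1)

theorem isMonotoneCycle_iff (hG : G.NonzeroLabels) :
    G.IsMonotoneCycle l e ↔
      (∀ a ∈ l, a ∈ G.without e) ∧ ∃ k : ℕ+, G.Traverses (G.pt (G.bar e)) l (k • G.pt e) := by
  rw [IsMonotoneCycle, isEEdgePath_iff hG, without_bar, and_assoc, exists_int_eq_iff]
  refine and_congr_right' ⟨?_, ?_⟩
  · rintro ⟨⟨r, h⟩, ht, k, hk⟩
    have hr : (r.exponent : ℚ) = k * G.absLab e := by
      rw [← h.exponent_mul_abs_q hG, ← hk, mul_comm (|_|), absLab_mul_abs_q_append_singleton hG, pt]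
    obtain ⟨m, rfl⟩ := exists_eq_smul_pt (ht.symm.trans (h.t_getLastD rfl)) ⟨k, hr⟩
    exact ⟨m, h⟩
  · rintro ⟨k, h⟩
    exact ⟨⟨_, h⟩, h.t_getLastD rfl, k, h.abs_q_append_singleton hG⟩

theorem ne_one_of_abs_eq_cast {x : ℚ} (hk : k ≠ 1) (hx : |x| = k) : x ≠ 1 := by
  rintro rfl
  rw [abs_one] at hx
  exact hk (PNat.coe_eq_one_iff.1 (by exact_mod_cast hx.symm))

theorem IsStrictMonotone.exists_isStrictMonotoneCycle (h : G.IsStrictMonotone e)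
    (hG : G.NonzeroLabels) : ∃ l, G.IsStrictMonotoneCycle l e := by
  obtain ⟨k, hk, h⟩ := h
  obtain ⟨l, hl, h⟩ := reach_iff_exists_traverses.1 h
  exact ⟨l, (isMonotoneCycle_iff hG).2 ⟨hl, k, h⟩,
    ne_one_of_abs_eq_cast hk (h.abs_q_append_singleton hG)⟩

theorem Positive.nonzeroLabels (hG : G.Positive) : G.NonzeroLabels := fun e => (hG e).ne'

theorem Positive.q_nonneg (hG : G.Positive) (l : List E) : 0 ≤ G.q l := by
  refine List.prod_nonneg fun x hx => ?_
  obtain ⟨a, -, rfl⟩ := List.mem_map.1 hx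
  exact div_nonneg (Int.cast_nonneg (hG _).le) (Int.cast_nonneg (hG _).le)

theorem IsStrictMonotoneCycle.isStrictMonotone (h : G.IsStrictMonotoneCycle l e)
    (hG : G.Positive) : G.IsStrictMonotone e := by
  obtain ⟨hcycle, hne⟩ := h
  obtain ⟨hl, k, h⟩ := (isMonotoneCycle_iff hG.nonzeroLabels).1 hcycle
  refine ⟨k, ?_, reach_iff_exists_traverses.2 ⟨l, hl, h⟩⟩
  rintro rfl
  have hq := h.abs_q_append_singleton hG.nonzeroLabels
  rw [abs_of_nonneg (hG.q_nonneg _)] at hq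
  exact hne (hq.trans Nat.cast_one)

theorem SelfMultiple.exists_isStrictIntegerCycle (h : G.SelfMultiple (G.without e) (G.pt e))
    (hG : G.NonzeroLabels) : ∃ l, G.IsStrictIntegerCycle e l := by
  obtain ⟨k, hk, h⟩ := h
  obtain ⟨l, hl, h⟩ := reach_iff_exists_traverses.1 h
  have hpath := (isEEdgePath_iff hG).2 ⟨hl, _, h⟩
  have hlast := h.t_getLastD (e := G.bar e) (congrArg G.o (G.bar_bar e))
  refine ⟨l, hpath, ?_, ?_, exists_int_eq_iff.2 ⟨k, h.abs_q hG⟩,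
    ne_one_of_abs_eq_cast hk (h.abs_q hG)⟩ <;> rcases l with - | ⟨a, l⟩
  · exact absurd (h.abs_q hG) fun h1 => ne_one_of_abs_eq_cast hk h1 rfl
  · exact List.cons_ne_nil a l
  · exact absurd (h.abs_q hG) fun h1 => ne_one_of_abs_eq_cast hk h1 rfl
  · exact hlast.trans (hpath.2.2.1 a rfl).symm

theorem SelfMultiple.exists_reach_without (h : G.SelfMultiple Set.univ (G.pt e)) :
    ∃ x ∉ G.without e, ∃ y ∉ G.without e, ∃ k : ℕ+, k ≠ 1 ∧
      G.Reach (G.without e) (G.pt x) (k • G.pt y) := by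
  by_contra! hone
  have hreach (q) (hq : G.Reach Set.univ (G.pt e) q) :
      ∃ x ∉ G.without e, G.Reach (G.without e) (G.pt x) q := by
    induction hq using Reach.crossing_induction with
    | refl => exact ⟨e, notMem_without_self e, .refl _⟩
    | cross f _ k _ ih =>
      obtain ⟨x, hx, ih⟩ := ih
      by_cases hf : f ∈ G.without e
      · exact ⟨x, hx, ih.tail_smul hf⟩
      · obtain rfl : k = 1 := by_contra fun hk => hone x hx f hf k hk ih
        rw [one_smul]
        exact ⟨G.bar f, mt (barClosed_without e).bar_mem_iff.1 hf, .refl _⟩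
  obtain ⟨k, hk, h⟩ := h
  obtain ⟨x, hx, h⟩ := hreach _ h
  exact hone x hx e (notMem_without_self e) k hk h

theorem SelfMultiple.without_or_isStrictMonotone (h : G.SelfMultiple Set.univ (G.pt e)) :
    (G.SelfMultiple (G.without e) (G.pt e) ∨ G.SelfMultiple (G.without e) (G.pt (G.bar e))) ∨
      G.IsStrictMonotone e ∨ G.IsStrictMonotone (G.bar e) := by
  obtain ⟨x, hx, y, hy, k, hk, h⟩ := h.exists_reach_without
  obtain rfl | rfl := eq_or_eq_bar_of_notMem_without hx <;>
    obtain rfl | rfl := eq_or_eq_bar_of_notMem_without hy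
  · exact Or.inl (Or.inl ⟨k, hk, h⟩)
  · refine Or.inr (Or.inr ⟨k, hk, ?_⟩)
    rwa [G.bar_bar, without_bar]
  · exact Or.inr (Or.inl ⟨k, hk, h⟩)
  · exact Or.inl (Or.inr ⟨k, hk, h⟩)

theorem SelfMultiple.mobile (h : G.SelfMultiple Set.univ (G.pt e)) (hG : G.NonzeroLabels) :
    G.Mobile e := by
  obtain (h | h) | h | h := h.without_or_isStrictMonotone
  · exact Or.inr ((h.exists_isStrictIntegerCycle hG).imp fun _ => Or.inl)
  · rw [← without_bar] at h
    exact Or.inr ((h.exists_isStrictIntegerCycle hG).imp fun _ => Or.inr)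
  · exact Or.inl ((h.exists_isStrictMonotoneCycle hG).imp fun _ => Or.inl)
  · exact Or.inl ((h.exists_isStrictMonotoneCycle hG).imp fun _ => Or.inr)

end Paths

section Roses

theorem IsStrictMonotone.selfMultiple (h : G.IsStrictMonotone e) :
    G.SelfMultiple Set.univ (G.pt e) := by
  obtain ⟨k, hk, h⟩ := h
  exact ⟨k, hk, (Reach.edge (Set.mem_univ e)).trans (h.mono (Set.subset_univ _))⟩

theorem SelfMultiple.pt_bar (h : G.SelfMultiple Set.univ (G.pt e)) :
    G.SelfMultiple Set.univ (G.pt (G.bar e)) :=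
  h.of_dom .univ (sameClass_pt_bar e).2

theorem tightClass_of_mem_classVerts [Subsingleton V] {v : V} (hc : G.SelfMultiple Set.univ c)
    (hv : v ∈ G.classVerts c) : G.TightClass c where
  selfMultiple := hc
  not_selfMultiple p _ :=
    not_selfMultiple_of_vertex_mem_classVerts (Subsingleton.elim v p.vertex ▸ hv)

/-- When no edge other than `e` and `ē` is a self-multiple, every other edge dominated by `e` lies
strictly below it, so paths from the class of `e` descend until they cross `e`. -/
theorem IsStrictMonotone.rootedClass (h : G.IsStrictMonotone e)
    (hunique : ∀ f ∈ G.without e, ¬ G.SelfMultiple Set.univ (G.pt f))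
    (hv : G.o e ∉ G.classVerts (G.pt e)) : G.RootedClass (G.pt e) (G.pt e) := by
  have hbelow : ∀ f ∈ G.without e, G.Dom Set.univ (G.pt e) (G.pt f) → f ∈ G.below (G.pt e) :=
    fun f hf hef => ⟨hef, fun hfe => hunique f hf (h.selfMultiple.of_dom .univ hfe)⟩
  have hdescend {p : Point V} (hp : G.Dom Set.univ (G.pt e) p) :
      ∀ f ∈ G.without e, G.Dom (G.without e) p (G.pt f) → f ∈ G.below (G.pt e) :=
    fun f hf hpf => hbelow f hf (hp.trans (hpf.mono (Set.subset_univ _)))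
  have hbar : G.Dom (G.below (G.pt e)) (G.pt (G.bar e)) (G.pt e) := by
    obtain ⟨k, -, h⟩ := h
    exact ⟨k, h.of_dominated (hdescend (sameClass_pt_bar e).1)⟩
  refine ⟨h.selfMultiple, .rfl, hv, fun p hp _ => ?_⟩
  obtain ⟨k, hk⟩ := hp.2
  obtain hk | ⟨f, -, hf, j, hj⟩ := hk.inter_or_exists_dom (G.without e)
  · exact ⟨k, (hk.mono Set.inter_subset_right).of_dominated (hdescend hp.1)⟩
  · have hpf : G.Dom (G.below (G.pt e)) p (G.pt f) :=
      ⟨j, (hj.mono Set.inter_subset_right).of_dominated (hdescend hp.1)⟩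
    obtain rfl | rfl := eq_or_eq_bar_of_notMem_without hf
    · exact hpf
    · exact hpf.trans hbar

theorem edgeExcess_pt_of_classVerts_eq_empty [Finite E] (h : G.classVerts (G.pt e) = ∅) :
    G.EdgeExcess (G.pt e) := by
  have hpos : 0 < (G.classEdges (G.pt e)).ncard := (Set.ncard_pos).2 ⟨e, .rfl⟩
  rwa [EdgeExcess, h, Set.ncard_empty]

theorem IsStrictMonotone.invariant [Subsingleton V] [Finite E] (h : G.IsStrictMonotone e)
    (hunique : ∀ f ∈ G.without e, ¬ G.SelfMultiple Set.univ (G.pt f)) : G.Invariant := by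
  by_cases hv : G.o e ∈ G.classVerts (G.pt e)
  · exact Or.inl ⟨_, tightClass_of_mem_classVerts h.selfMultiple hv⟩
  · refine Or.inr ⟨_, _, h.rootedClass hunique hv, edgeExcess_pt_of_classVerts_eq_empty ?_⟩
    exact Set.eq_empty_of_forall_notMem fun v => Subsingleton.elim (G.o e) v ▸ hv

theorem Reach.exponent_mul_pow_mul_pow {g : E} (hS : ∀ f ∈ S, f = g ∨ f = G.bar g)
    (h : G.Reach S p q) : ∃ a b : ℕ,
      q.exponent * (G.absLab g ^ a * G.absLab (G.bar g) ^ b) =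
        p.exponent * (G.absLab (G.bar g) ^ a * G.absLab g ^ b) := by
  induction h using Reach.crossing_induction with
  | refl => exact ⟨0, 0, rfl⟩
  | cross f hf k _ ih =>
    obtain ⟨a, b, ih⟩ := ih
    obtain rfl | rfl := hS f hf
    · refine ⟨a + 1, b, ?_⟩
      calc k * G.absLab (G.bar f) * (G.absLab f ^ (a + 1) * G.absLab (G.bar f) ^ b)
          = k * G.absLab f * (G.absLab f ^ a * G.absLab (G.bar f) ^ b) *
              G.absLab (G.bar f) := by rw [pow_succ]; ac_rfl
        _ = _ := (congrArg (· * G.absLab (G.bar f)) ih).trans (by rw [pow_succ]; ac_rfl)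
    · refine ⟨a, b + 1, ?_⟩
      calc k * G.absLab (G.bar (G.bar g)) * (G.absLab g ^ a * G.absLab (G.bar g) ^ (b + 1))
          = k * G.absLab (G.bar g) * (G.absLab g ^ a * G.absLab (G.bar g) ^ b) *
              G.absLab g := by rw [pow_succ, G.bar_bar]; ac_rfl
        _ = _ := (congrArg (· * G.absLab g) ih).trans (by rw [pow_succ]; ac_rfl)

theorem selfMultiple_pt_of_mul_pow_eq [Subsingleton V] {n : ℕ} (hk : k ≠ 1)
    (h : k * G.absLab e ^ n = G.absLab (G.bar e) ^ n) : G.SelfMultiple Set.univ (G.pt e) := by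
  have hn : n ≠ 0 := by
    rintro rfl
    exact hk (by simpa only [pow_zero, mul_one] using h)
  obtain ⟨m, hm⟩ : G.absLab e ∣ G.absLab (G.bar e) := by
    have hdvd := PNat.dvd_iff.1 (Dvd.intro_left _ h)
    rw [PNat.pow_coe, PNat.pow_coe] at hdvd
    exact PNat.dvd_iff.2 ((Nat.pow_dvd_pow_iff hn).1 hdvd)
  have hpt : G.pt (G.bar e) = m • G.pt e :=
    Point.ext (Subsingleton.elim _ _) (hm.trans (mul_comm _ _))
  refine ⟨m, ?_, hpt ▸ Reach.edge (Set.mem_univ e)⟩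
  rintro rfl
  rw [hm, mul_one, mul_eq_right] at h
  exact hk h

/-- A single loop has a self-multiple only if one of its labels properly divides the other. -/
theorem SelfMultiple.pt_of_subset_pair [Subsingleton V] {g : E}
    (hS : ∀ f ∈ S, f = g ∨ f = G.bar g) (h : G.SelfMultiple S p) :
    G.SelfMultiple Set.univ (G.pt g) := by
  obtain ⟨k, hk, h⟩ := h
  obtain ⟨a, b, hab⟩ := h.exponent_mul_pow_mul_pow hS
  replace hab : k * (G.absLab g ^ a * G.absLab (G.bar g) ^ b) =
      G.absLab (G.bar g) ^ a * G.absLab g ^ b := by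
    rw [Point.exponent_smul, mul_comm k, mul_assoc] at hab
    exact mul_left_cancel hab
  obtain ⟨n, rfl⟩ | ⟨n, rfl⟩ := (le_total b a).imp Nat.exists_eq_add_of_le Nat.exists_eq_add_of_le
  · refine selfMultiple_pt_of_mul_pow_eq (n := n) hk
      (mul_right_cancel (b := G.absLab g ^ b * G.absLab (G.bar g) ^ b) ?_)
    convert hab using 1 <;> rw [pow_add] <;> ac_rfl
  · rw [← G.bar_bar g]
    refine (selfMultiple_pt_of_mul_pow_eq (n := n) hk
      (mul_right_cancel (b := G.absLab g ^ a * G.absLab (G.bar g) ^ a) ?_)).pt_bar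
    rw [G.bar_bar]
    convert hab using 1 <;> rw [pow_add] <;> ac_rfl

theorem SelfMultiple.nonempty (h : G.SelfMultiple S p) : S.Nonempty := by
  obtain ⟨k, hk, h⟩ := h
  obtain h | ⟨_, ⟨e, he, -⟩, -⟩ := h.cases_head
  · exact absurd (Point.smul_right_cancel (h.symm.trans (one_smul ℕ+ p).symm)) hk
  · exact ⟨e, he⟩

theorem exists_selfMultiple_minimal [Finite E] (h : G.SelfMultiple Set.univ (G.pt e)) :
    ∃ f, G.SelfMultiple Set.univ (G.pt f) ∧
      ∀ g ∈ G.below (G.pt f), ¬ G.SelfMultiple Set.univ (G.pt g) := by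
  obtain ⟨f, hf, hmin⟩ := Set.exists_min_image {f | G.SelfMultiple Set.univ (G.pt f)}
    (fun f => {g | G.Dom Set.univ (G.pt f) (G.pt g)}.ncard) (Set.toFinite _) ⟨e, h⟩
  refine ⟨f, hf, fun g hg hself => (hmin g hself).not_gt (Set.ncard_lt_ncard ?_ (Set.toFinite _))⟩
  exact ⟨fun x hx => hg.1.trans hx, fun hsub => hg.2 (hsub (Dom.refl (G.pt f)))⟩

theorem subset_without_of_notMem (hS : G.BarClosed S) (he : e ∉ S) : S ⊆ G.without e :=
  fun _ hx => ⟨fun h => he (h ▸ hx), fun h => he (hS.bar_mem_iff.1 (h ▸ hx))⟩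

theorem ncard_add_four_le_card [Finite E] (hS : G.BarClosed S) (he : e ∉ S) (hf : f ∉ S)
    (hfe : f ∈ G.without e) : S.ncard + 4 ≤ Nat.card E := by
  have hle : S.ncard ≤ (G.without e ∩ G.without f).ncard := Set.ncard_le_ncard
    (Set.subset_inter (subset_without_of_notMem hS he) (subset_without_of_notMem hS hf))
  have hcard_f := ncard_inter_without_add_two (barClosed_without e) hfe
  have hcard_e := ncard_inter_without_add_two (BarClosed.univ (G := G)) (Set.mem_univ e)
  rw [Set.univ_inter, Set.ncard_univ] at hcard_e
  omega

theorem eq_or_eq_bar_of_ncard_le_two [Finite E] (hS : G.BarClosed S) (hcard : S.ncard ≤ 2)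
    (he : e ∈ S) (hf : f ∈ S) : f = e ∨ f = G.bar e := by
  refine eq_or_eq_bar_of_notMem_without fun hfe => ?_
  have hpos : 0 < (S ∩ G.without e).ncard := (Set.ncard_pos).2 ⟨f, hf, hfe⟩
  have := ncard_inter_without_add_two hS he
  omega

theorem invariant_of_card_le_six [Subsingleton V] [Finite E] (hcard : Nat.card E ≤ 6)
    (he : G.SelfMultiple Set.univ (G.pt e)) (hf : G.SelfMultiple Set.univ (G.pt f))
    (hfe : f ∈ G.without e) : G.Invariant := by
  obtain ⟨d, hd, hbelow⟩ := exists_selfMultiple_minimal he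
  have hcard_below := ncard_add_four_le_card (barClosed_below _) (fun h => hbelow e h he)
    (fun h => hbelow f h hf) hfe
  refine Or.inl ⟨G.pt d, hd, fun p _ hp => ?_⟩
  obtain ⟨g, hg⟩ := hp.nonempty
  refine hbelow g hg (hp.pt_of_subset_pair fun x hx => ?_)
  exact eq_or_eq_bar_of_ncard_le_two (barClosed_below _) (by omega) hg hx

/-- Any two edges with a self-multiple are mobile, so at most one pair has one, unless there are at
most three pairs of edges. -/
theorem IsRose.isPersistent [Finite E] {n : ℕ} (hrose : G.IsRose n) (hpos : G.Positive)
    (hcond : (∃ e, G.Mobile e ∧ ∀ x, G.Mobile x → x = e ∨ x = G.bar e) ∨ n ≤ 3)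
    (hcycle : G.HasStrictMonotoneCycle) : G.IsPersistent := by
  obtain ⟨hsub, _⟩ := Nat.card_eq_one_iff_unique.1 hrose.1
  refine ⟨inferInstance, ‹_›, hpos.nonzeroLabels, ?_⟩
  obtain ⟨l, e, hl⟩ := hcycle
  have he := hl.isStrictMonotone hpos
  by_cases hunique : ∀ f ∈ G.without e, ¬ G.SelfMultiple Set.univ (G.pt f)
  · exact he.invariant hunique
  push Not at hunique
  obtain ⟨f, hfe, hf⟩ := hunique
  obtain ⟨d, -, hd⟩ | hn := hcond
  · have hpair {x : E} (hx : G.SelfMultiple Set.univ (G.pt x)) : x = d ∨ x = G.bar d :=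
      hd x (hx.mobile hpos.nonzeroLabels)
    have hwithout : G.without e = G.without d := by
      obtain rfl | rfl := hpair he.selfMultiple
      exacts [rfl, without_bar d]
    rw [hwithout] at hfe
    exact absurd (hpair hf) (not_or.2 hfe)
  · exact invariant_of_card_le_six (by rw [hrose.2]; omega) he.selfMultiple hf hfe

theorem IsPersistent.hasStrictMonotoneCycle (h : G.IsPersistent) : G.HasStrictMonotoneCycle := by
  obtain ⟨_, _, hlab, hinv⟩ := h
  obtain ⟨e, he⟩ := hinv.exists_isStrictMonotone
  obtain ⟨l, hl⟩ := he.exists_isStrictMonotoneCycle hlab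
  exact ⟨l, e, hl⟩

end Roses

end LGraph

theorem stmt18_general {V E : Type} [Finite E] (G : LGraph V E) (n : ℕ)
    (hrose : G.IsRose n) (hpos : G.Positive)
    (hcond : (∃ e : E, G.Mobile e ∧ ∀ x : E, G.Mobile x → x = e ∨ x = G.bar e) ∨ n ≤ 3)
    (hsmc : G.HasStrictMonotoneCycle)
    (Y : BGraph) (hseq : Relation.ReflTransGen BGraph.ElemMove ⟨V, E, G⟩ Y) :
    Y.G.HasStrictMonotoneCycle := by
  have hY : Y.G.IsPersistent := by
    induction hseq with
    | refl => exact hrose.isPersistent hpos hcond hsmc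
    | tail _ hmove ih => exact (LGraph.isPersistent_iff_of_elemMove hmove).1 ih
  exact hY.hasStrictMonotoneCycle

/-- (Proposition 3.9) Let `Γ` be an `n`-rose with positive labels such that
either exactly one pair of edges is mobile, or `n ≤ 3`. If `Γ` has a strict monotone cycle
and `Γ'` is a reduced labeled graph obtained from `Γ` by a finite sequence of slide,
induction and A-moves with all intermediate graphs reduced, then `Γ'` has a strict
monotone cycle. -/
theorem stmt18 {V E : Type} [Finite V] [Finite E] (G : LGraph V E) (n : ℕ)
    (hrose : G.IsRose n) (hpos : G.Positive)
    (hcond : (∃ e : E, G.Mobile e ∧ ∀ x : E, G.Mobile x → x = e ∨ x = G.bar e) ∨ n ≤ 3)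
    (hsmc : G.HasStrictMonotoneCycle)
    (Y : BGraph) (hseq : BGraph.MoveSeq ⟨V, E, G⟩ Y) :
    Y.G.HasStrictMonotoneCycle :=
  stmt18_general G n hrose hpos hcond hsmc Y
    (Relation.ReflTransGen.mono (fun _ _ h => h.1) _ _ hseq)
end
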